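/- arXiv:1301.3091 — 2 statements merged into one kernel-verified Lean document; each statement's English description precedes it below -/
import Mathlib

section
/- Let Γ be an infinite group generated by a finite set S with S = S⁻¹ and id ∉ S, and let G = G(Γ,S) be its Cayley graph, with connective constant μ(G). Let ρ ∈ Γ with ρ ≠ id, let N be the normal closure of {ρ} in Γ, and let G_ρ be the simple graph on the quotient group Γ/N in which distinct cosets ḡ, h̄ are adjacent if and only if ḡ⁻¹h̄ is the image in Γ/N of some element of S. Let σ_n^ρ denote the number of n-step self-avoiding walks in G_ρ starting at the identity coset. Then limsup_{n→∞} (σ_n^ρ)^{1/n} < μ(G). -/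
open Filter SimpleGraph

noncomputable def sawCount {V : Type*} (G : SimpleGraph V) (v : V) (n : ℕ) : ℕ :=
  Nat.card {p : (w : V) × G.Walk v w // p.2.IsPath ∧ p.2.length = n}

def HasConnectiveConst {V : Type*} (G : SimpleGraph V) (μ : ℝ) : Prop :=
  ∀ v : V, Filter.Tendsto (fun n : ℕ => (sawCount G v n : ℝ) ^ (1 / (n : ℝ)))
    Filter.atTop (nhds μ)

/-- The Cayley graph of a group with respect to a (symmetric) set `S` of generators:
distinct `g, h` are adjacent iff `g⁻¹ * h ∈ S` (for `S = S⁻¹` the symmetrisation below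
agrees with this). -/
def cayleyGraph {Γ : Type*} [Group Γ] (S : Set Γ) : SimpleGraph Γ :=
  SimpleGraph.fromRel (fun g h => g⁻¹ * h ∈ S)
namespace RelatorProof
open scoped Classical

/-! ### Words and self-avoiding words -/

section Words
variable {H : Type*} [Group H]

/-- A word is self-avoiding when its partial products are distinct. -/
def IsSAW (l : List H) : Prop :=
  ∀ i j, i < j → j ≤ l.length → (l.take i).prod ≠ (l.take j).prod

/-- All words of length `n` over the alphabet `T`. -/
noncomputable def words {X : Type*} (T : Finset X) : ℕ → Finset (List X)
  | 0 => {[]}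
  | n + 1 => (T ×ˢ words T n).image (fun p => p.1 :: p.2)

theorem mem_words {X : Type*} (T : Finset X) (n : ℕ) (l : List X) :
    l ∈ words T n ↔ l.length = n ∧ ∀ x ∈ l, x ∈ T := by
  induction n generalizing l with
  | zero =>
    simp only [words, Finset.mem_singleton]
    constructor
    · rintro rfl; simp
    · rintro ⟨h, -⟩; exact List.length_eq_zero_iff.mp h
  | succ n ih =>
    simp only [words, Finset.mem_image, Finset.mem_product, Prod.exists]
    constructor
    · rintro ⟨a, b, ⟨ha, hb⟩, rfl⟩
      rw [ih] at hb
      simp [hb.1, ha]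
      exact hb.2
    · rintro ⟨h1, h2⟩
      cases l with
      | nil => simp at h1
      | cons a b =>
        refine ⟨a, b, ⟨h2 a (by simp), (ih b).2 ⟨by simpa using h1, fun x hx => h2 x (by simp [hx])⟩⟩, rfl⟩

theorem card_words {X : Type*} (T : Finset X) (n : ℕ) : (words T n).card = T.card ^ n := by
  induction n with
  | zero => simp [words]
  | succ n ih =>
    rw [words, Finset.card_image_of_injective, Finset.card_product, ih, pow_succ, mul_comm]
    rintro ⟨a, b⟩ ⟨c, d⟩ h
    simpa using h

/-- Self-avoiding words of length `n` over `T`. -/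
noncomputable def saws (T : Finset H) (n : ℕ) : Finset (List H) :=
  (words T n).filter IsSAW

theorem mem_saws (T : Finset H) (n : ℕ) (l : List H) :
    l ∈ saws T n ↔ l.length = n ∧ (∀ x ∈ l, x ∈ T) ∧ IsSAW l := by
  simp [saws, mem_words, and_assoc]

theorem isSAW_nil : IsSAW ([] : List H) := by
  intro i j h1 h2
  simp at h2; omega

theorem isSAW_cons (s : H) (l : List H) :
    IsSAW (s :: l) ↔ IsSAW l ∧ ∀ j ≤ l.length, s * (l.take j).prod ≠ 1 := by
  constructor
  · intro h
    refine ⟨fun i j hij hj he => ?_, fun j hj he => ?_⟩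
    · refine h (i+1) (j+1) (by omega) (by simpa using hj) ?_
      simp [he]
    · refine h 0 (j+1) (by omega) (by simpa using hj) ?_
      simp [he]
  · rintro ⟨h1, h2⟩ i j hij hj he
    obtain ⟨j, rfl⟩ : ∃ j', j = j' + 1 := ⟨j - 1, by omega⟩
    simp at hj
    rcases i with _ | i
    · simp at he
      exact h2 j hj he.symm
    · simp at he
      exact h1 i j (by omega) hj he

theorem take_add_prod (l : List H) (a b : ℕ) :
    (l.take (a + b)).prod = (l.take a).prod * ((l.drop a).take b).prod := by
  rw [List.take_add, List.prod_append]

theorem isSAW_drop {l : List H} (h : IsSAW l) (a : ℕ) : IsSAW (l.drop a) := by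
  intro i j hij hj he
  simp at hj
  refine h (a+i) (a+j) (by omega) (by omega) ?_
  rw [take_add_prod, take_add_prod, he]

theorem isSAW_take {l : List H} (h : IsSAW l) (a : ℕ) : IsSAW (l.take a) := by
  intro i j hij hj he
  simp at hj
  refine h i j (by omega) (by omega) ?_
  rw [List.take_take, List.take_take] at he
  rwa [min_eq_left (by omega), min_eq_left (by omega)] at he

/-! ### Walks in the Cayley graph versus words -/

/-- The word spelled by a walk. -/
def spell {G : SimpleGraph H} : {v w : H} → G.Walk v w → List H
  | _, _, .nil => []
  | v, _, .cons (v := u) _ p => (v⁻¹ * u) :: spell p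

theorem spell_length {G : SimpleGraph H} {v w : H} (p : G.Walk v w) :
    (spell p).length = p.length := by
  induction p with
  | nil => simp [spell]
  | cons h p ih => simp [spell, ih]

theorem spell_support {G : SimpleGraph H} {v w : H} (p : G.Walk v w) (x : H) :
    x ∈ p.support ↔ ∃ j ≤ p.length, x = v * ((spell p).take j).prod := by
  induction p with
  | nil => simp [spell]
  | @cons a b c h p ih =>
    simp only [Walk.support_cons, List.mem_cons, ih, spell, Walk.length_cons]
    constructor
    · rintro (rfl | ⟨j, hj, rfl⟩)
      · exact ⟨0, by simp⟩
      · exact ⟨j+1, by omega, by simp [mul_assoc]⟩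
    · rintro ⟨j, hj, rfl⟩
      rcases j with _ | j
      · simp
      · right
        exact ⟨j, by omega, by simp [mul_assoc]⟩

theorem spell_isSAW {G : SimpleGraph H} {v w : H} (p : G.Walk v w) :
    IsSAW (spell p) ↔ p.IsPath := by
  induction p with
  | nil => simp [spell, isSAW_nil]
  | @cons a b c h p ih =>
    rw [spell, isSAW_cons, ih, Walk.cons_isPath_iff, spell_support, spell_length]
    refine and_congr_right fun _ => ?_
    push Not
    refine forall_congr' fun j => forall_congr' fun hj => ?_
    rw [not_iff_not]
    constructor
    · intro h
      rw [mul_assoc, inv_mul_eq_one] at h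
      exact h
    · intro h
      rw [mul_assoc, inv_mul_eq_one]
      exact h

theorem spell_inj {G : SimpleGraph H} {v w : H} (p : G.Walk v w) :
    ∀ {w' : H} (q : G.Walk v w'), spell p = spell q →
      (⟨w, p⟩ : (w : H) × G.Walk v w) = ⟨w', q⟩ := by
  induction p with
  | nil =>
    intro w' q h
    cases q with
    | nil => rfl
    | cons => simp [spell] at h
  | cons h p ih =>
    intro w' q hq
    cases q with
    | nil => simp [spell] at hq
    | cons h' q =>
      simp only [spell, List.cons.injEq, mul_right_inj] at hq
      obtain ⟨rfl, h2⟩ := hq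
      have := ih q h2
      simp only [Sigma.mk.injEq] at this
      obtain ⟨rfl, h3⟩ := this
      rw [eq_of_heq h3]

theorem spell_mem (T : Finset H) (hT : ∀ s ∈ T, s⁻¹ ∈ T) {v w : H}
    (p : (cayleyGraph (T : Set H)).Walk v w) : ∀ x ∈ spell p, x ∈ T := by
  induction p with
  | nil => simp [spell]
  | cons h p ih =>
    intro x hx
    simp only [spell, List.mem_cons] at hx
    rcases hx with rfl | hx
    · simp only [cayleyGraph, fromRel_adj] at h
      rcases h.2 with h | h
      · exact h
      · have := hT _ h
        simpa using this
    · exact ih x hx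

theorem spell_surj (T : Finset H) (l : List H) (hl : ∀ x ∈ l, x ∈ T) (hs : IsSAW l) :
    ∀ v : H, ∃ (w : H) (p : (cayleyGraph (T : Set H)).Walk v w), spell p = l := by
  induction l with
  | nil => intro v; exact ⟨v, .nil, rfl⟩
  | cons s l ih =>
    intro v
    rw [isSAW_cons] at hs
    obtain ⟨w, p, hp⟩ := ih (fun x hx => hl x (by simp [hx])) hs.1 (v * s)
    have h1 : s ≠ 1 := by simpa using hs.2 0 (by simp)
    have hadj : (cayleyGraph (T : Set H)).Adj v (v * s) := by
      simp only [cayleyGraph, fromRel_adj]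
      refine ⟨by simpa using h1, Or.inl ?_⟩
      simpa using hl s (by simp)
    exact ⟨w, .cons hadj p, by simp [spell, hp]⟩

theorem sawCount_eq (T : Finset H) (hT : ∀ s ∈ T, s⁻¹ ∈ T) (v : H) (n : ℕ) :
    sawCount (cayleyGraph (T : Set H)) v n = (saws T n).card := by
  have h1 : ∀ p : {p : (w : H) × (cayleyGraph (T : Set H)).Walk v w //
      p.2.IsPath ∧ p.2.length = n}, spell p.1.2 ∈ saws T n := by
    rintro ⟨⟨w, p⟩, hp, hn⟩
    rw [mem_saws, spell_length, spell_isSAW]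
    exact ⟨hn, spell_mem T hT p, hp⟩
  have h2 : Function.Bijective (fun p : {p : (w : H) × (cayleyGraph (T : Set H)).Walk v w //
      p.2.IsPath ∧ p.2.length = n} => (⟨spell p.1.2, h1 p⟩ : ↥(saws T n))) := by
    constructor
    · rintro ⟨⟨w, p⟩, hp⟩ ⟨⟨w', p'⟩, hp'⟩ h
      simp only [Subtype.mk.injEq] at h ⊢
      exact spell_inj p p' h
    · rintro ⟨l, hl⟩
      rw [mem_saws] at hl
      obtain ⟨w, p, hp⟩ := spell_surj T l hl.2.1 hl.2.2 v
      refine ⟨⟨⟨w, p⟩, ?_, ?_⟩, ?_⟩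
      · rw [← spell_isSAW, hp]; exact hl.2.2
      · simp only; rw [← spell_length, hp]; exact hl.1
      · simpa using hp
  rw [sawCount, Nat.card_eq_of_bijective _ h2, Nat.card_eq_fintype_card, Fintype.card_coe]

end Words
/-! ### Exponential smallness -/

/-- `f` grows exponentially slower than `μ ^ n`. -/
def Small (μ : ℝ) (f : ℕ → ℝ) : Prop :=
  ∃ C y : ℝ, 0 < y ∧ y < μ ∧ ∀ n, f n ≤ C * y ^ n

theorem small_of_blocks {μ : ℝ} (hμ : 0 < μ) {f : ℕ → ℝ} {C Y : ℝ} {M : ℕ} (hM : 0 < M)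
    (hC : 0 ≤ C) (hY : 0 < Y) (hYM : Y < μ ^ M) (h : ∀ n, f n ≤ C * Y ^ (n / M)) : Small μ f := by
  obtain ⟨y, hy0, hyM⟩ : ∃ y : ℝ, 0 < y ∧ y ^ M = Y :=
    ⟨Y ^ ((M : ℝ)⁻¹), Real.rpow_pos_of_pos hY _, Real.rpow_inv_natCast_pow hY.le hM.ne'⟩
  refine ⟨C * (max 1 y⁻¹) ^ M, y, hy0, ?_, fun n => (h n).trans ?_⟩
  · rw [← hyM] at hYM
    exact lt_of_pow_lt_pow_left₀ M hμ.le hYM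
  · rw [mul_assoc]
    refine mul_le_mul_of_nonneg_left ?_ hC
    have hn : y ^ n = Y ^ (n / M) * y ^ (n % M) := by
      rw [← hyM, ← pow_mul, ← pow_add, Nat.div_add_mod]
    rw [hn]
    have h1 : (1:ℝ) ≤ (max 1 y⁻¹) ^ M * y ^ (n % M) := by
      have h2 : (max 1 y⁻¹) ^ (n % M) ≤ (max 1 y⁻¹) ^ M :=
        pow_le_pow_right₀ (le_max_left _ _) (Nat.mod_lt _ hM).le
      have h3 : (1:ℝ) ≤ (max 1 y⁻¹) ^ (n % M) * y ^ (n % M) := by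
        rw [← mul_pow]
        refine one_le_pow₀ ?_
        calc (1:ℝ) = y⁻¹ * y := by field_simp
          _ ≤ _ := mul_le_mul_of_nonneg_right (le_max_right _ _) hy0.le
      exact h3.trans (mul_le_mul_of_nonneg_right h2 (by positivity))
    calc Y ^ (n / M) = Y ^ (n / M) * 1 := by ring
      _ ≤ Y ^ (n / M) * ((max 1 y⁻¹) ^ M * y ^ (n % M)) := mul_le_mul_of_nonneg_left h1 (by positivity)
      _ = _ := by ring

theorem small_contra {μ : ℝ} {f g : ℕ → ℝ} (hf : Small μ f) (hg : Small μ g)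
    {c : ℝ} (hc : 0 < c) (h : ∀ n, c * μ ^ n ≤ f n + g n) : False := by
  obtain ⟨C, y, hy0, hy, hf⟩ := hf
  obtain ⟨C', y', hy0', hy', hg⟩ := hg
  have hμ : 0 < μ := hy0.trans hy
  have t1 : Tendsto (fun n : ℕ => C * (y / μ) ^ n + C' * (y' / μ) ^ n) atTop (nhds (C * 0 + C' * 0)) := by
    refine Tendsto.add (Tendsto.const_mul _ ?_) (Tendsto.const_mul _ ?_)
    · exact tendsto_pow_atTop_nhds_zero_of_lt_one (by positivity) (by rwa [div_lt_one hμ])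
    · exact tendsto_pow_atTop_nhds_zero_of_lt_one (by positivity) (by rwa [div_lt_one hμ])
  have h2 : c ≤ C * 0 + C' * 0 := by
    refine ge_of_tendsto' t1 fun n => ?_
    rw [div_pow, div_pow, ← mul_div_assoc, ← mul_div_assoc, ← add_div, le_div_iff₀ (by positivity)]
    exact (h n).trans (add_le_add (hf n) (hg n))
  linarith

theorem limsup_lt_of_small {μ : ℝ} {f : ℕ → ℝ} (h0 : ∀ n, 0 ≤ f n) (hf : Small μ f) :
    Filter.limsup (fun n : ℕ => (f n) ^ (1 / (n : ℝ))) Filter.atTop < μ := by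
  obtain ⟨C, y, hy0, hy, hf⟩ := hf
  refine lt_of_le_of_lt ?_ hy
  set C' := max C 1 with hC'
  have hC0 : 0 < C' := lt_of_lt_of_le one_pos (le_max_right _ _)
  have ht : Tendsto (fun n : ℕ => C' ^ (1 / (n : ℝ)) * y) atTop (nhds y) := by
    have h1 : Tendsto (fun n : ℕ => C' ^ (1 / (n : ℝ))) atTop (nhds (C' ^ (0:ℝ))) := by
      refine Tendsto.rpow tendsto_const_nhds tendsto_one_div_atTop_nhds_zero_nat (Or.inl hC0.ne')
    simpa using h1.mul_const y
  rw [← ht.limsup_eq]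
  refine Filter.limsup_le_limsup ?_ ?_ ht.isBoundedUnder_le
  · filter_upwards [eventually_gt_atTop 0] with n hn
    have hn' : (n:ℝ) ≠ 0 := by exact_mod_cast hn.ne'
    calc (f n) ^ (1 / (n : ℝ)) ≤ (C' * y ^ n) ^ (1 / (n : ℝ)) := by
          refine Real.rpow_le_rpow (h0 n) ((hf n).trans ?_) (by positivity)
          exact mul_le_mul_of_nonneg_right (le_max_left _ _) (by positivity)
      _ = _ := by
          rw [Real.mul_rpow hC0.le (by positivity), one_div, Real.pow_rpow_inv_natCast hy0.le hn.ne']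
  · exact Filter.isCoboundedUnder_le_of_le atTop (x := 0) (fun n => Real.rpow_nonneg (h0 n) _)

/-- Generating function bound above the connective constant. -/
theorem sum_bound {μ y : ℝ} {f : ℕ → ℝ} (h0 : ∀ n, 0 ≤ f n) (hμ : 0 < μ)
    (hf : Tendsto (fun n : ℕ => (f n) ^ (1 / (n : ℝ))) atTop (nhds μ)) (hy : μ < y) :
    ∃ A : ℝ, 0 ≤ A ∧ ∀ B : ℕ, ∑ m ∈ Finset.range B, f m * (y⁻¹) ^ m ≤ A := by
  obtain ⟨x, hx1, hx2⟩ := exists_between hy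
  have hx0 : 0 < x := hμ.trans hx1
  have hy0 : 0 < y := hμ.trans hy
  have hs : Summable (fun m : ℕ => f m * (y⁻¹) ^ m) := by
    have hg : Summable (fun m : ℕ => (x / y) ^ m) :=
      summable_geometric_of_lt_one (by positivity) (by rwa [div_lt_one hy0])
    refine Summable.of_norm_bounded_eventually_nat hg ?_
    filter_upwards [hf.eventually (gt_mem_nhds hx1), eventually_gt_atTop 0] with n hn hn0
    rw [Real.norm_of_nonneg (mul_nonneg (h0 n) (by positivity)), div_pow, div_eq_mul_inv, inv_pow]
    refine mul_le_mul_of_nonneg_right ?_ (by positivity)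
    have h1 : ((f n) ^ (1 / (n : ℝ))) ^ n ≤ x ^ n :=
      pow_le_pow_left₀ (Real.rpow_nonneg (h0 n) _) hn.le n
    rwa [one_div, Real.rpow_inv_natCast_pow (h0 n) hn0.ne'] at h1
  refine ⟨∑' m, f m * (y⁻¹) ^ m, tsum_nonneg fun m => mul_nonneg (h0 m) (by positivity), fun B => ?_⟩
  exact hs.sum_le_tsum _ fun m _ => mul_nonneg (h0 m) (by positivity)

/-! ### Visits to translated regions and the block argument -/

section Blocks
variable {H : Type*} [Group H]

/-- Number of visits of `w` to the translate of `D` at its `i`-th vertex. -/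
noncomputable def cnt (D : Finset H) (w : List H) (i : ℕ) : ℕ :=
  ((Finset.range (w.length + 1)).filter
    (fun j => ((w.take i).prod)⁻¹ * (w.take j).prod ∈ D)).card

/-- Nowhere `k` visits. -/
def IsBad (D : Finset H) (k : ℕ) (b : List H) : Prop := ∀ i ≤ b.length, cnt D b i < k

/-- Self-avoiding words nowhere having `k` visits. -/
noncomputable def bads (T D : Finset H) (k N : ℕ) : Finset (List H) :=
  (saws T N).filter (IsBad D k)

/-- Blocks (of length `N`, separated by single letters) somewhere having `k` visits. -/
noncomputable def goods (D : Finset H) (k N : ℕ) (w : List H) (q : ℕ) : Finset ℕ :=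
  (Finset.range q).filter (fun j => ¬ IsBad D k ((w.drop (j * (N + 1))).take N))

theorem goods_succ (D : Finset H) (k N : ℕ) (w : List H) (q : ℕ) :
    (goods D k N w (q + 1)).card =
      (goods D k N (w.drop (N + 1)) q).card + (if IsBad D k (w.take N) then 0 else 1) := by
  simp only [goods, Finset.card_filter]
  rw [Finset.sum_range_succ']
  congr 1
  · refine Finset.sum_congr rfl fun j _ => ?_
    rw [List.drop_drop, show (N + 1) + j * (N + 1) = (j + 1) * (N + 1) by ring]
  · simp only [zero_mul, List.drop_zero]
    split_ifs <;> simp_all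

theorem card_saws_le (T : Finset H) (n : ℕ) : (saws T n).card ≤ T.card ^ n := by
  rw [← card_words]
  exact Finset.card_le_card (Finset.filter_subset _ _)

theorem block_sum (T D : Finset H) (k N : ℕ) (θ : ℝ) (hθ : 0 ≤ θ) (n q : ℕ) :
    ∑ w ∈ saws T (q * (N + 1) + n), θ ^ (goods D k N w q).card ≤
      (T.card * ((bads T D k N).card + θ * (saws T N).card)) ^ q * (T.card : ℝ) ^ n := by
  induction q with
  | zero =>
    simp only [goods, Finset.range_zero, Finset.filter_empty, Finset.card_empty, pow_zero,
      Finset.sum_const, nsmul_eq_mul, mul_one, one_mul, zero_mul, zero_add]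
    exact_mod_cast card_saws_le T n
  | succ q ih =>
    obtain ⟨c, hc⟩ : ∃ c : List H → ℝ, ∀ b, c b = if IsBad D k b then (1:ℝ) else θ :=
      ⟨_, fun _ => rfl⟩
    let g : List H × List H × List H → ℝ := fun p => c p.1 * θ ^ (goods D k N p.2.2 q).card
    let im : List H → List H × List H × List H := fun w =>
      (w.take N, (w.drop N).take 1, w.drop (N + 1))
    have hlen : ∀ w ∈ saws T ((q + 1) * (N + 1) + n), w.length = N + 1 + (q * (N + 1) + n) := by
      intro w hw
      rw [mem_saws] at hw
      rw [hw.1]; ring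
    have hinj : Set.InjOn im (saws T ((q + 1) * (N + 1) + n)) := by
      intro w _ w' _ h
      simp only [im, Prod.mk.injEq] at h
      rw [← List.take_append_drop N w, ← List.take_append_drop N w', h.1,
        ← List.take_append_drop 1 (w.drop N), ← List.take_append_drop 1 (w'.drop N), h.2.1,
        List.drop_drop, List.drop_drop, h.2.2]
    have hsub : (saws T ((q + 1) * (N + 1) + n)).image im ⊆
        saws T N ×ˢ words T 1 ×ˢ saws T (q * (N + 1) + n) := by
      intro p hp
      rw [Finset.mem_image] at hp
      obtain ⟨w, hw, rfl⟩ := hp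
      have hl := hlen w hw
      rw [mem_saws] at hw
      simp only [im, Finset.mem_product, mem_saws, mem_words]
      refine ⟨⟨by simp; omega, fun x hx => hw.2.1 x (List.mem_of_mem_take hx),
        isSAW_take hw.2.2 _⟩, ⟨by simp; omega, fun x hx => hw.2.1 x
          (List.mem_of_mem_drop (List.mem_of_mem_take hx))⟩, by simp; omega,
          fun x hx => hw.2.1 x (List.mem_of_mem_drop hx), isSAW_drop hw.2.2 _⟩
    have hg0 : ∀ p, 0 ≤ g p := by
      intro p
      simp only [g, hc]
      split_ifs <;> positivity
    have hb : ∑ b ∈ saws T N, c b ≤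
        (bads T D k N).card + θ * (saws T N).card := by
      simp only [hc]
      rw [Finset.sum_ite]
      simp only [Finset.sum_const, nsmul_eq_mul, mul_one]
      refine add_le_add (le_of_eq rfl) ?_
      rw [mul_comm]
      refine mul_le_mul_of_nonneg_left ?_ hθ
      exact_mod_cast Finset.card_le_card (Finset.filter_subset _ _)
    calc ∑ w ∈ saws T ((q + 1) * (N + 1) + n), θ ^ (goods D k N w (q + 1)).card
        = ∑ w ∈ saws T ((q + 1) * (N + 1) + n), g (im w) := by
          refine Finset.sum_congr rfl fun w _ => ?_
          rw [goods_succ, pow_add, mul_comm]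
          simp only [g, im, hc]
          congr 1
          split_ifs <;> simp
      _ = ∑ p ∈ (saws T ((q + 1) * (N + 1) + n)).image im, g p := by
          rw [Finset.sum_image hinj]
      _ ≤ ∑ p ∈ saws T N ×ˢ words T 1 ×ˢ saws T (q * (N + 1) + n), g p :=
          Finset.sum_le_sum_of_subset_of_nonneg hsub fun p _ _ => hg0 p
      _ = (∑ b ∈ saws T N, c b) * (T.card *
            ∑ w ∈ saws T (q * (N + 1) + n), θ ^ (goods D k N w q).card) := by
          rw [Finset.sum_product, Finset.sum_mul]
          refine Finset.sum_congr rfl fun b _ => ?_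
          rw [Finset.sum_product]
          simp only [g, ← Finset.mul_sum, Finset.sum_const, card_words, pow_one, nsmul_eq_mul]
      _ ≤ ((bads T D k N).card + θ * (saws T N).card) * (T.card *
            ((T.card * ((bads T D k N).card + θ * (saws T N).card)) ^ q * (T.card : ℝ) ^ n)) := by
          gcongr
      _ = _ := by ring

theorem block_small (T D : Finset H) (k N : ℕ) {μ : ℝ} (hμ : 0 < μ)
    (h : (T.card : ℝ) * (bads T D k N).card < μ ^ (N + 1)) :
    ∃ K : ℕ, 0 < K ∧ Small μ (fun n => (((saws T n).filter (fun w =>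
      K * (goods D k N w (n / (N + 1))).card ≤ n / (N + 1))).card : ℝ)) := by
  set B : ℝ := ((bads T D k N).card : ℝ) with hB
  set c : ℝ := ((saws T N).card : ℝ) with hc
  set X := μ ^ (N + 1) with hX
  have hX0 : 0 < X := by positivity
  obtain ⟨η, hη1, hη2⟩ := exists_between (show T.card * B / X < 1 by rwa [div_lt_one hX0])
  have hη0 : 0 < η := lt_of_le_of_lt (by positivity) hη1
  rw [div_lt_iff₀ hX0] at hη1
  have ht : Tendsto (fun K : ℕ => T.card * (B + η ^ K * c)) atTop (nhds (T.card * (B + 0 * c))) :=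
    Tendsto.const_mul _ (Tendsto.const_add _ (Tendsto.mul_const _
      (tendsto_pow_atTop_nhds_zero_of_lt_one hη0.le hη2)))
  have hK := (ht.eventually (gt_mem_nhds (show T.card * (B + 0 * c) < η * X by simpa using hη1))).and
    (eventually_gt_atTop 0)
  obtain ⟨K, hK1, hK0⟩ := hK.exists
  refine ⟨K, hK0, ?_⟩
  obtain ⟨Y, hY1, hY2⟩ := exists_between (show T.card * (B + η ^ K * c) / η < X by
    rw [div_lt_iff₀ hη0, mul_comm X]; exact hK1)
  have hY0 : 0 < Y := lt_of_le_of_lt (by positivity) hY1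
  refine small_of_blocks (C := ((T.card : ℝ) + 1) ^ (N + 1)) (M := N + 1) hμ (by omega)
    (by positivity) hY0 hY2 fun n => ?_
  set q := n / (N + 1) with hq
  have hn : q * (N + 1) + n % (N + 1) = n := Nat.div_add_mod' n (N + 1)
  have hs := block_sum T D k N (η ^ K) (by positivity) (n % (N + 1)) q
  rw [hn] at hs
  have h1 : (((saws T n).filter (fun w => K * (goods D k N w q).card ≤ q)).card : ℝ) * η ^ q ≤
      ∑ w ∈ saws T n, (η ^ K) ^ (goods D k N w q).card := by
    rw [← nsmul_eq_mul, ← Finset.sum_const]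
    refine le_trans (Finset.sum_le_sum (g := fun w => (η ^ K) ^ (goods D k N w q).card) ?_)
      (Finset.sum_le_sum_of_subset_of_nonneg (Finset.filter_subset _ _) fun _ _ _ => by positivity)
    intro w hw
    rw [Finset.mem_filter] at hw
    rw [← pow_mul]
    exact pow_le_pow_of_le_one hη0.le hη2.le hw.2
  have h2 : (T.card * (B + η ^ K * c)) ^ q ≤ (Y * η) ^ q := by
    refine pow_le_pow_left₀ (by positivity) ?_ q
    rw [div_lt_iff₀ hη0] at hY1
    exact hY1.le
  have h3 : (T.card : ℝ) ^ (n % (N + 1)) ≤ ((T.card : ℝ) + 1) ^ (N + 1) :=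
    calc (T.card : ℝ) ^ (n % (N + 1)) ≤ ((T.card : ℝ) + 1) ^ (n % (N + 1)) :=
          pow_le_pow_left₀ (by positivity) (by linarith) _
      _ ≤ _ := pow_le_pow_right₀ (by linarith [Nat.cast_nonneg (α := ℝ) T.card])
          (Nat.mod_lt _ (by omega)).le
  have h4 := h1.trans (hs.trans (mul_le_mul h2 h3 (by positivity) (by positivity)))
  rw [mul_pow] at h4
  refine le_of_mul_le_mul_right (h4.trans (le_of_eq ?_)) (show 0 < η ^ q by positivity)
  ring

theorem cnt_le_card {D : Finset H} {w : List H} (hw : IsSAW w) (i : ℕ) : cnt D w i ≤ D.card := by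
  refine Finset.card_le_card_of_injOn (fun j => ((w.take i).prod)⁻¹ * (w.take j).prod) ?_ ?_
  · intro j hj
    simpa using (Finset.mem_filter.mp hj).2
  · intro a ha b hb hab
    simp only [mul_right_inj] at hab
    have ha' := (Finset.mem_range.mp (Finset.mem_filter.mp ha).1)
    have hb' := (Finset.mem_range.mp (Finset.mem_filter.mp hb).1)
    rcases lt_trichotomy a b with h | h | h
    · exact absurd hab (hw a b h (by omega))
    · exact h
    · exact absurd hab.symm (hw b a h (by omega))

end Blocks

/-! ### Marked words -/

section Marked
variable {Γ Q R : Type*} [Group Γ] [Group Q]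

/-- Vertices of a concatenation. -/
theorem take_concat_cases {Γ : Type*} (l1 : List Γ) (s : Γ) (l2 : List Γ) (j : ℕ) :
    (j ≤ l1.length ∧ (l1 ++ s :: l2).take j = l1.take j) ∨
    (∃ i, j = l1.length + 1 + i ∧ (l1 ++ s :: l2).take j = l1 ++ s :: l2.take i) := by
  by_cases h : j ≤ l1.length
  · left
    exact ⟨h, List.take_append_of_le_length h⟩
  · right
    refine ⟨j - l1.length - 1, by omega, ?_⟩
    rw [List.take_append, List.take_of_length_le (by omega)]
    congr 1
    obtain ⟨i, hi⟩ : ∃ i, j - l1.length = i + 1 := ⟨j - l1.length - 1, by omega⟩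
    rw [hi]
    simp

theorem isSAW_concat (π : Γ →* Q) {l1 l2 : List Γ} {s : Γ} {U V : Set Q}
    (h1 : IsSAW l1) (h2 : IsSAW l2) (hU : ∀ j, π (l1.take j).prod ∈ U)
    (hV : ∀ j, π (l2.take j).prod ∈ V) (hd : ∀ q ∈ V, π (l1.prod) * π s * q ∉ U) :
    IsSAW (l1 ++ s :: l2) := by
  intro i j hij hj he
  simp only [List.length_append, List.length_cons] at hj
  rcases take_concat_cases l1 s l2 i with ⟨hi, ei⟩ | ⟨i', hi, ei⟩ <;>
  rcases take_concat_cases l1 s l2 j with ⟨hj', ej⟩ | ⟨j', hj', ej⟩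
  · rw [ei, ej] at he
    exact h1 i j hij hj' he
  · rw [ei, ej] at he
    refine hd _ (hV j') ?_
    have := hU i
    rw [he] at this
    simpa [mul_assoc] using this
  · omega
  · rw [ei, ej] at he
    simp only [List.prod_append, List.prod_cons, mul_right_inj] at he
    exact h2 i' j' (by omega) (by omega) he

variable (π : Γ →* Q) (L : R → List Γ) (r : R → List Q) (U : R → Set Q) (φ : Q → Γ)

/-- Inserted word. -/
def oL (o : Option R) : List Γ := o.elim [] L
/-- Removed word. -/
def oR (o : Option R) : List Q := o.elim [] r
/-- Region. -/
def oU (o : Option R) : Set Q := o.elim {1} U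

/-- The modified word. -/
def vw : List (Option R × Q) → List Γ
  | [] => []
  | c :: y => oL L c.1 ++ φ c.2 :: vw y

/-- The original word. -/
def ww : List (Option R × Q) → List Q
  | [] => []
  | c :: y => oR r c.1 ++ c.2 :: ww y

/-- All regions visited by a marked word. -/
def Reg : List (Option R × Q) → Set Q
  | [] => {1}
  | c :: y => oU U c.1 ∪ {q | ∃ z ∈ Reg y, q = (oR r c.1).prod * c.2 * z}

/-- Admissible marked words: regions are disjoint. -/
def Adm (T : Finset Q) : List (Option R × Q) → Prop
  | [] => True
  | c :: y => c.2 ∈ T ∧ (∀ q' ∈ Reg r U y, (oR r c.1).prod * c.2 * q' ∉ oU U c.1) ∧ Adm T y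

/-- The tokens of a marked word. -/
def toks : List (Option R × Q) → List R
  | [] => []
  | c :: y => c.1.toList ++ toks y

/-- Properties of tokens. -/
structure TokenSpec (S : Finset Γ) (Λ : ℕ) : Prop where
  one_mem : ∀ τ, (1 : Q) ∈ U τ
  letters : ∀ τ, ∀ x ∈ L τ, x ∈ S
  saw : ∀ τ, IsSAW (L τ)
  inU : ∀ τ j, π ((L τ).take j).prod ∈ U τ
  prod_eq : ∀ τ, π (L τ).prod = (r τ).prod
  loop : ∀ τ, ∃ a b, a ≠ [] ∧ L τ = a ++ b ∧ π a.prod = 1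
  len : ∀ τ, (L τ).length ≤ Λ

variable {π L r U φ} {S : Finset Γ} {Λ : ℕ} {T : Finset Q}

theorem one_mem_oU (hs : TokenSpec π L r U S Λ) (o : Option R) : (1 : Q) ∈ oU U o := by
  cases o with
  | none => simp [oU]
  | some τ => exact hs.one_mem τ

theorem oL_prod (hs : TokenSpec π L r U S Λ) (o : Option R) :
    π (oL L o).prod = (oR r o).prod := by
  cases o with
  | none => simp [oL, oR]
  | some τ => exact hs.prod_eq τ

theorem vw_spec (hs : TokenSpec π L r U S Λ) (hφ : ∀ q ∈ T, φ q ∈ S ∧ π (φ q) = q)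
    (x : List (Option R × Q)) (hx : Adm r U T x) :
    IsSAW (vw L φ x) ∧ (∀ j, π ((vw L φ x).take j).prod ∈ Reg r U x) ∧
      ∀ a ∈ vw L φ x, a ∈ S := by
  induction x with
  | nil =>
    refine ⟨isSAW_nil, ?_, ?_⟩ <;> simp [vw, Reg]
  | cons c y ih =>
    obtain ⟨o, s⟩ := c
    obtain ⟨hT, hd, hy⟩ := hx
    obtain ⟨i1, i2, i3⟩ := ih hy
    simp only at hT hd
    have hφs := hφ s hT
    have e1 : IsSAW (oL L o) := by
      cases o with
      | none => exact isSAW_nil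
      | some τ => exact hs.saw τ
    have e2 : ∀ j, π ((oL L o).take j).prod ∈ oU U o := by
      cases o with
      | none => simp [oL, oU]
      | some τ => exact hs.inU τ
    have e3 : ∀ x ∈ oL L o, x ∈ S := by
      cases o with
      | none => simp [oL]
      | some τ => exact hs.letters τ
    refine ⟨?_, ?_, ?_⟩
    · refine isSAW_concat π e1 i1 e2 i2 ?_
      intro q hq
      rw [oL_prod hs, hφs.2]
      exact hd q hq
    · intro j
      simp only [vw, Reg]
      rcases take_concat_cases (oL L o) (φ s) (vw L φ y) j with ⟨-, ej⟩ | ⟨i, -, ej⟩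
      · left; rw [ej]; exact e2 j
      · right
        refine ⟨_, i2 i, ?_⟩
        rw [ej, List.prod_append, List.prod_cons, map_mul, map_mul, oL_prod hs, hφs.2, mul_assoc]
    · intro a ha
      simp only [vw, List.mem_append, List.mem_cons] at ha
      rcases ha with ha | rfl | ha
      · exact e3 a ha
      · exact hφs.1
      · exact i3 a ha

theorem vw_conflict (hs : TokenSpec π L r U S Λ) (hφ : ∀ q ∈ T, φ q ∈ S ∧ π (φ q) = q)
    {τ : R} {s s' : Q} {y y' : List (Option R × Q)} (hx : Adm r U T ((none, s) :: y))
    (h : vw L φ ((none, s) :: y) = vw L φ ((some τ, s') :: y')) : False := by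
  obtain ⟨a, b, ha, hab, hπ⟩ := hs.loop τ
  obtain ⟨hT, hd, hy⟩ := hx
  simp only [vw, oL, Option.elim, List.nil_append] at h
  rw [hab] at h
  cases a with
  | nil => exact ha rfl
  | cons a0 a =>
    simp only [List.cons_append, List.append_assoc, List.cons.injEq] at h
    obtain ⟨h1, h2⟩ := h
    have h3 := (vw_spec hs hφ y hy).2.1 a.length
    rw [h2, List.take_left] at h3
    have h4 := hd _ h3
    simp only [oR, oU, Option.elim, List.prod_nil, one_mul, Set.mem_singleton_iff] at h4
    apply h4
    rw [List.prod_cons, map_mul, ← h1, (hφ s hT).2] at hπ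
    exact hπ

theorem vw_inj (hs : TokenSpec π L r U S Λ) (hφ : ∀ q ∈ T, φ q ∈ S ∧ π (φ q) = q)
    (x : List (Option R × Q)) : ∀ x', Adm r U T x → Adm r U T x' → vw L φ x = vw L φ x' →
      toks x = toks x' → x = x' := by
  induction x with
  | nil =>
    intro x' _ _ h _
    cases x' with
    | nil => rfl
    | cons c y => simp [vw] at h
  | cons c y ih =>
    intro x' hx hx' h ht
    cases x' with
    | nil => simp [vw] at h
    | cons c' y' =>
      obtain ⟨o, s⟩ := c
      obtain ⟨o', s'⟩ := c'
      have key : o = o' → (o, s) :: y = (o', s') :: y' := by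
        rintro rfl
        simp only [vw, List.append_cancel_left_eq, List.cons.injEq] at h
        simp only [toks, List.append_cancel_left_eq] at ht
        have e1 : s = s' := by
          rw [← (hφ s hx.1).2, ← (hφ s' hx'.1).2, h.1]
        rw [e1, ih y' hx.2.2 hx'.2.2 h.2 ht]
      cases o with
      | none =>
        cases o' with
        | none => exact key rfl
        | some τ => exact (vw_conflict hs hφ hx h).elim
      | some τ =>
        cases o' with
        | none => exact (vw_conflict hs hφ hx' h.symm).elim
        | some τ' =>
          apply key
          simp [toks] at ht
          rw [ht.1]

theorem vw_length (hs : TokenSpec π L r U S Λ) (x : List (Option R × Q)) :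
    (vw L φ x).length ≤ (ww r x).length + Λ * (toks x).length ∧
      (toks x).length ≤ (ww r x).length := by
  induction x with
  | nil => simp [vw, ww, toks]
  | cons c y ih =>
    obtain ⟨o, s⟩ := c
    cases o with
    | none =>
      simp [vw, ww, toks, oL, oR]
      omega
    | some τ =>
      have := hs.len τ
      simp [vw, ww, toks, oL, oR]
      constructor
      · nlinarith
      · omega

/-- The weighted count of admissible marked words. -/
theorem weight_bound [Fintype R] (hs : TokenSpec π L r U S Λ)
    (hφ : ∀ q ∈ T, φ q ∈ S ∧ π (φ q) = q)
    {z t A : ℝ} (hz : 0 < z) (ht : 0 ≤ t) (htR : Fintype.card R * t ≤ 1 / 2) (hA0 : 0 ≤ A)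
    (hA : ∀ B : ℕ, ∑ m ∈ Finset.range B, ((saws S m).card : ℝ) * z ^ m ≤ A)
    (Y : Finset (List (Option R × Q))) (hY : ∀ x ∈ Y, Adm r U T x) :
    ∑ x ∈ Y, z ^ (vw L φ x).length * t ^ (toks x).length ≤ A * 2 := by
  obtain ⟨B1, hB1⟩ : ∃ B, ∀ x ∈ Y, (vw L φ x).length < B := by
    refine ⟨Y.sup (fun x => (vw L φ x).length) + 1, fun x hx => ?_⟩
    exact Nat.lt_succ_of_le (Finset.le_sup (f := fun x => (vw L φ x).length) hx)
  obtain ⟨B2, hB2⟩ : ∃ B, ∀ x ∈ Y, (toks x).length < B := by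
    refine ⟨Y.sup (fun x => (toks x).length) + 1, fun x hx => ?_⟩
    exact Nat.lt_succ_of_le (Finset.le_sup (f := fun x => (toks x).length) hx)
  let im : List (Option R × Q) → List Γ × List R := fun x => (vw L φ x, toks x)
  have hinj : Set.InjOn im Y := by
    intro x hx x' hx' h
    simp only [im, Prod.mk.injEq] at h
    exact vw_inj hs hφ x x' (hY x hx) (hY x' hx') h.1 h.2
  have hsub : Y.image im ⊆ ((Finset.range B1).biUnion (saws S)) ×ˢ
      ((Finset.range B2).biUnion (words (Finset.univ : Finset R))) := by
    intro p hp
    rw [Finset.mem_image] at hp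
    obtain ⟨x, hx, rfl⟩ := hp
    obtain ⟨h1, -, h3⟩ := vw_spec hs hφ x (hY x hx)
    simp only [im, Finset.mem_product, Finset.mem_biUnion, Finset.mem_range, mem_saws, mem_words]
    exact ⟨⟨_, hB1 x hx, rfl, h3, h1⟩, ⟨_, hB2 x hx, rfl, by simp⟩⟩
  have b1 : ∑ v ∈ (Finset.range B1).biUnion (saws S), z ^ v.length ≤ A := by
    rw [Finset.sum_biUnion]
    · refine le_trans (le_of_eq ?_) (hA B1)
      refine Finset.sum_congr rfl fun m _ => ?_
      rw [← nsmul_eq_mul, ← Finset.sum_const]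
      refine Finset.sum_congr rfl fun v hv => ?_
      rw [((mem_saws _ _ _).1 hv).1]
    · intro a _ b _ hab
      rw [Function.onFun, Finset.disjoint_left]
      intro v hv hv'
      exact hab (((mem_saws _ _ _).1 hv).1.symm.trans ((mem_saws _ _ _).1 hv').1)
  have b2 : ∑ v ∈ (Finset.range B2).biUnion (words (Finset.univ : Finset R)), t ^ v.length ≤ 2 := by
    rw [Finset.sum_biUnion]
    · have : ∀ m ∈ Finset.range B2, ∑ v ∈ words (Finset.univ : Finset R) m, t ^ v.length ≤
          (1 / 2 : ℝ) ^ m := by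
        intro m _
        calc ∑ v ∈ words (Finset.univ : Finset R) m, t ^ v.length
            = ∑ v ∈ words (Finset.univ : Finset R) m, t ^ m :=
              Finset.sum_congr rfl fun v hv => by rw [((mem_words _ _ _).1 hv).1]
          _ = (Fintype.card R * t) ^ m := by
              rw [Finset.sum_const, card_words, nsmul_eq_mul, mul_pow, Finset.card_univ]
              push_cast; ring
          _ ≤ _ := pow_le_pow_left₀ (by positivity) htR m
      refine (Finset.sum_le_sum this).trans ?_
      have h2 := (summable_geometric_two).sum_le_tsum (Finset.range B2) (fun _ _ => by positivity)
      rwa [tsum_geometric_two] at h2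
    · intro a _ b _ hab
      rw [Function.onFun, Finset.disjoint_left]
      intro v hv hv'
      exact hab (((mem_words _ _ _).1 hv).1.symm.trans ((mem_words _ _ _).1 hv').1)
  calc ∑ x ∈ Y, z ^ (vw L φ x).length * t ^ (toks x).length
      = ∑ p ∈ Y.image im, z ^ p.1.length * t ^ p.2.length := by rw [Finset.sum_image hinj]
    _ ≤ ∑ p ∈ ((Finset.range B1).biUnion (saws S)) ×ˢ
          ((Finset.range B2).biUnion (words (Finset.univ : Finset R))),
          z ^ p.1.length * t ^ p.2.length :=
        Finset.sum_le_sum_of_subset_of_nonneg hsub fun p _ _ => by positivity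
    _ = (∑ v ∈ (Finset.range B1).biUnion (saws S), z ^ v.length) *
          ∑ v ∈ (Finset.range B2).biUnion (words (Finset.univ : Finset R)), t ^ v.length := by
        rw [Finset.sum_product, Finset.sum_mul_sum]
    _ ≤ A * 2 := mul_le_mul b1 b2 (Finset.sum_nonneg fun _ _ => by positivity) hA0

end Marked

/-! ### Building marked words from a word with many disjoint good places -/

section Build
variable {Q R : Type*} [Group Q]

theorem build {r : R → List Q} {U : R → Set Q} {T : Finset Q}
    (w : List Q) (hw : IsSAW w) (hwT : ∀ x ∈ w, x ∈ T)
    (I : Finset ℕ) (e : ℕ → ℕ) (Cs : ℕ → Set Q) (tk : ℕ → R)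
    (he1 : ∀ p ∈ I, p ≤ e p) (he2 : ∀ p ∈ I, e p < w.length)
    (hr : ∀ p ∈ I, r (tk p) = (w.drop p).take (e p - p))
    (hU : ∀ p ∈ I, ∀ q, q ∈ U (tk p) ↔ (w.take p).prod * q ∈ Cs p)
    (hvis : ∀ p ∈ I, ∀ j ≤ w.length, (w.take j).prod ∈ Cs p → p ≤ j ∧ j ≤ e p)
    (hlt : ∀ p ∈ I, ∀ p' ∈ I, p < p' → e p < p')
    (hdisj : ∀ p ∈ I, ∀ p' ∈ I, p < p' → ∀ q, q ∈ Cs p → q ∉ Cs p')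
    {t : ℝ} (ht : 0 ≤ t) :
    ∀ m p, p ≤ w.length → w.length - p ≤ m → ∃ X : Finset (List (Option R × Q)),
      (∀ x ∈ X, Adm r U T x ∧ ww r x = w.drop p ∧ ∀ q ∈ Reg r U x,
        (∃ j, p ≤ j ∧ j ≤ w.length ∧ (w.take p).prod * q = (w.take j).prod) ∨
        (∃ p' ∈ I, p ≤ p' ∧ (w.take p).prod * q ∈ Cs p')) ∧
      (1 + t) ^ (I.filter (fun i => p ≤ i)).card ≤ ∑ x ∈ X, t ^ (toks x).length := by
  intro m
  induction m with
  | zero =>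
    intro p hp hm
    have hp' : p = w.length := by omega
    subst hp'
    refine ⟨{[]}, ?_, ?_⟩
    · intro x hx
      rw [Finset.mem_singleton] at hx
      subst hx
      refine ⟨trivial, by simp [ww], ?_⟩
      intro q hq
      left
      simp only [Reg, Set.mem_singleton_iff] at hq
      exact ⟨w.length, le_rfl, le_rfl, by simp [hq]⟩
    · rw [Finset.filter_eq_empty_iff.mpr]
      · simp [toks]
      · intro i hi h
        have := he1 i hi
        have := he2 i hi
        omega
  | succ m ih =>
    intro p hp hm
    rcases hp.eq_or_lt with hpl | hpl
    · exact ih p hp (by omega)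
    have hdrop : ∀ (i : ℕ) (hi : i < w.length), w.drop i = w[i] :: w.drop (i + 1) :=
      fun i hi => List.drop_eq_getElem_cons hi
    have htk : ∀ (i : ℕ) (hi : i < w.length), (w.take (i + 1)).prod = (w.take i).prod * w[i] := by
      intro i hi
      rw [List.prod_take_succ _ _ hi]
    obtain ⟨X1, hX1, hs1⟩ := ih (p + 1) (by omega) (by omega)
    -- leaving position `p` unmarked
    have hA : ∀ x ∈ X1.image (fun x => ((none : Option R), w[p]) :: x), Adm r U T x ∧
        ww r x = w.drop p ∧ ∀ q ∈ Reg r U x,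
        (∃ j, p ≤ j ∧ j ≤ w.length ∧ (w.take p).prod * q = (w.take j).prod) ∨
        (∃ p' ∈ I, p ≤ p' ∧ (w.take p).prod * q ∈ Cs p') := by
      intro x hx
      rw [Finset.mem_image] at hx
      obtain ⟨y, hy, rfl⟩ := hx
      obtain ⟨h1, h2, h3⟩ := hX1 y hy
      refine ⟨⟨hwT _ (List.getElem_mem _), ?_, h1⟩, ?_, ?_⟩
      · intro q hq hq1
        simp only [oR, oU, Option.elim, List.prod_nil, one_mul, Set.mem_singleton_iff] at hq1
        have hq2 : (w.take (p + 1)).prod * q = (w.take p).prod := by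
          rw [htk p hpl, mul_assoc, hq1, mul_one]
        rcases h3 q hq with ⟨j, hj1, hj2, hj3⟩ | ⟨p', hp', hpp, hj⟩
        · rw [hq2] at hj3
          exact hw p j (by omega) hj2 hj3
        · rw [hq2] at hj
          have := hvis p' hp' p hp hj
          omega
      · simp only [ww, oR, Option.elim, List.nil_append, h2]
        rw [hdrop p hpl]
      · intro q hq
        simp only [Reg, oR, oU, Option.elim, List.prod_nil, one_mul, Set.mem_union,
          Set.mem_singleton_iff, Set.mem_ofPred_eq] at hq
        rcases hq with rfl | ⟨q', hq', rfl⟩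
        · left; exact ⟨p, le_rfl, hp, by simp⟩
        · rw [← mul_assoc, ← htk p hpl]
          rcases h3 q' hq' with ⟨j, hj1, hj2, hj3⟩ | ⟨p', hp', hpp, hj⟩
          · left; exact ⟨j, by omega, hj2, hj3⟩
          · right; exact ⟨p', hp', by omega, hj⟩
    have hsA : ∑ x ∈ X1.image (fun x => ((none : Option R), w[p]) :: x), t ^ (toks x).length =
        ∑ x ∈ X1, t ^ (toks x).length := by
      rw [Finset.sum_image]
      · simp [toks]
      · intro a _ b _ h
        simpa using h
    by_cases hpI : p ∈ I
    · have hle := he1 p hpI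
      have hel := he2 p hpI
      obtain ⟨X2, hX2, hs2⟩ := ih (e p + 1) (by omega) (by omega)
      have hrp : (w.take p).prod * (r (tk p)).prod = (w.take (e p)).prod := by
        rw [hr p hpI, ← take_add_prod, Nat.add_sub_cancel' hle]
      have hrp2 : ∀ q, (w.take p).prod * ((r (tk p)).prod * w[e p] * q) =
          (w.take (e p + 1)).prod * q := by
        intro q
        rw [htk _ hel, ← hrp]
        simp only [mul_assoc]
      have hB : ∀ x ∈ X2.image (fun x => (some (tk p), w[e p]) :: x), Adm r U T x ∧
          ww r x = w.drop p ∧ ∀ q ∈ Reg r U x,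
          (∃ j, p ≤ j ∧ j ≤ w.length ∧ (w.take p).prod * q = (w.take j).prod) ∨
          (∃ p' ∈ I, p ≤ p' ∧ (w.take p).prod * q ∈ Cs p') := by
        intro x hx
        rw [Finset.mem_image] at hx
        obtain ⟨y, hy, rfl⟩ := hx
        obtain ⟨h1, h2, h3⟩ := hX2 y hy
        refine ⟨⟨hwT _ (List.getElem_mem _), ?_, h1⟩, ?_, ?_⟩
        · intro q hq hq1
          simp only [oR, oU, Option.elim] at hq1
          rw [hU p hpI, hrp2] at hq1
          rcases h3 q hq with ⟨j, hj1, hj2, hj3⟩ | ⟨p', hp', hpp, hj⟩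
          · rw [hj3] at hq1
            have := hvis p hpI j hj2 hq1
            omega
          · exact hdisj p hpI p' hp' (by omega) _ hq1 hj
        · simp only [ww, oR, Option.elim, h2]
          rw [hr p hpI, ← hdrop (e p) hel]
          conv_rhs => rw [← List.take_append_drop (e p - p) (w.drop p), List.drop_drop,
            Nat.add_sub_cancel' hle]
        · intro q hq
          simp only [Reg, oR, oU, Option.elim, Set.mem_union, Set.mem_ofPred_eq] at hq
          rcases hq with hq | ⟨q', hq', rfl⟩
          · right
            exact ⟨p, hpI, le_rfl, (hU p hpI q).1 hq⟩
          · rw [hrp2]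
            rcases h3 q' hq' with ⟨j, hj1, hj2, hj3⟩ | ⟨p', hp', hpp, hj⟩
            · left; exact ⟨j, by omega, hj2, hj3⟩
            · right; exact ⟨p', hp', by omega, hj⟩
      have hsB : ∑ x ∈ X2.image (fun x => (some (tk p), w[e p]) :: x), t ^ (toks x).length =
          t * ∑ x ∈ X2, t ^ (toks x).length := by
        rw [Finset.sum_image, Finset.mul_sum]
        · refine Finset.sum_congr rfl fun x _ => ?_
          simp [toks, pow_succ, mul_comm]
        · intro a _ b _ h
          simpa using h
      refine ⟨X1.image (fun x => ((none : Option R), w[p]) :: x) ∪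
        X2.image (fun x => (some (tk p), w[e p]) :: x), ?_, ?_⟩
      · intro x hx
        rw [Finset.mem_union] at hx
        exact hx.elim (hA x) (hB x)
      · rw [Finset.sum_union, hsA, hsB]
        · have c1 : I.filter (fun i => e p + 1 ≤ i) = I.filter (fun i => p + 1 ≤ i) := by
            refine Finset.filter_congr fun i hi => ?_
            constructor
            · intro h; omega
            · intro h
              exact hlt p hpI i hi h
          have c2 : I.filter (fun i => p ≤ i) = insert p (I.filter (fun i => p + 1 ≤ i)) := by
            ext i
            simp only [Finset.mem_filter, Finset.mem_insert]
            constructor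
            · rintro ⟨h1, h2⟩
              rcases h2.eq_or_lt with h | h
              · left; exact h.symm
              · right; exact ⟨h1, h⟩
            · rintro (rfl | ⟨h1, h2⟩)
              · exact ⟨hpI, le_rfl⟩
              · exact ⟨h1, by omega⟩
          rw [c1] at hs2
          rw [c2, Finset.card_insert_of_notMem (by simp), pow_succ]
          have := mul_le_mul_of_nonneg_left hs2 ht
          linarith
        · rw [Finset.disjoint_left]
          intro x hx hx'
          rw [Finset.mem_image] at hx hx'
          obtain ⟨y, _, rfl⟩ := hx
          obtain ⟨y', _, h⟩ := hx'
          simp at h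
    · refine ⟨X1.image (fun x => ((none : Option R), w[p]) :: x), hA, ?_⟩
      rw [hsA]
      have c1 : I.filter (fun i => p ≤ i) = I.filter (fun i => p + 1 ≤ i) := by
        refine Finset.filter_congr fun i hi => ?_
        constructor
        · intro h
          rcases h.eq_or_lt with h | h
          · subst h; exact absurd hi hpI
          · exact h
        · intro h; omega
      rw [c1]
      exact hs1

end Build

/-! ### The loop -/

section Loop
variable {Γ Q : Type*} [Group Γ] [Group Q]

/-- A closed loop of the quotient, opened up in `Γ`. -/
structure LoopSpec (π : Γ →* Q) (S : Finset Γ) (ℓ : ℕ) (g : ℕ → Γ) : Prop where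
  pos : 0 < ℓ
  zero : g 0 = 1
  step : ∀ i, (g i)⁻¹ * g (i + 1) ∈ S
  per : ∀ i, π (g (i + ℓ)) = π (g i)
  inj : ∀ i j, π (g i) = π (g j) → i % ℓ = j % ℓ
  ne : ∀ i, g (i + ℓ) ≠ g i

theorem exists_word (S : Finset Γ) (hsym : ∀ s ∈ S, s⁻¹ ∈ S)
    (hgen : Subgroup.closure (S : Set Γ) = ⊤) (x : Γ) :
    ∃ l : List Γ, (∀ s ∈ l, s ∈ S) ∧ l.prod = x := by
  have hx : x ∈ Subgroup.closure (S : Set Γ) := by rw [hgen]; trivial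
  induction hx using Subgroup.closure_induction with
  | mem x hx => exact ⟨[x], by simpa using hx, by simp⟩
  | one => exact ⟨[], by simp, by simp⟩
  | mul x y _ _ hx hy =>
    obtain ⟨l, h1, rfl⟩ := hx
    obtain ⟨l', h1', rfl⟩ := hy
    refine ⟨l ++ l', ?_, by simp⟩
    intro s hs
    rcases List.mem_append.mp hs with h | h
    · exact h1 s h
    · exact h1' s h
  | inv x _ hx =>
    obtain ⟨l, h1, rfl⟩ := hx
    refine ⟨(l.map (·⁻¹)).reverse, ?_, by rw [List.prod_inv_reverse]⟩
    intro s hs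
    simp only [List.mem_reverse, List.mem_map] at hs
    obtain ⟨a, ha, rfl⟩ := hs
    exact hsym a (h1 a ha)

theorem exists_loop (π : Γ →* Q) (S : Finset Γ) (hsym : ∀ s ∈ S, s⁻¹ ∈ S)
    (hgen : Subgroup.closure (S : Set Γ) = ⊤) (ρ : Γ) (hρ : ρ ≠ 1) (hπ : π ρ = 1) :
    ∃ ℓ g, LoopSpec π S ℓ g := by
  have hex : ∃ n, ∃ l : List Γ, l.length = n ∧ (∀ s ∈ l, s ∈ S) ∧ π l.prod = 1 ∧ l.prod ≠ 1 := by
    obtain ⟨l, h1, h2⟩ := exists_word S hsym hgen ρ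
    exact ⟨l.length, l, rfl, h1, by rw [h2]; exact hπ, by rw [h2]; exact hρ⟩
  obtain ⟨u, hu1, hu2, hu3, hu4⟩ := Nat.find_spec hex
  have hmin : ∀ l : List Γ, l.length < u.length → (∀ s ∈ l, s ∈ S) → π l.prod = 1 → l.prod = 1 := by
    intro l hl h1 h2
    by_contra h3
    rw [hu1] at hl
    exact Nat.find_min hex hl ⟨l, rfl, h1, h2, h3⟩
  have hpos : 0 < u.length := by
    rw [List.length_pos_iff]
    rintro rfl
    simp at hu4
  set ℓ := u.length with hℓ
  set ν := u.prod with hν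
  -- distinctness of the projected loop
  have hdist : ∀ i j, i < j → j < ℓ → π (u.take i).prod ≠ π (u.take j).prod := by
    intro i j hij hj he
    obtain ⟨d, rfl⟩ : ∃ d, j = i + d := ⟨j - i, by omega⟩
    rw [take_add_prod, map_mul] at he
    have h1 : π (((u.drop i).take d).prod) = 1 := by
      simpa using he.symm
    have h2 := hmin ((u.drop i).take d) (by simp; omega)
      (fun s hs => hu2 s (List.mem_of_mem_drop (List.mem_of_mem_take hs))) h1
    have h3 : (u.take i ++ u.drop (i + d)).prod = ν := by
      rw [hν, ← List.prod_take_mul_prod_drop u (i + d), take_add_prod, h2, mul_one, List.prod_append]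
    have h4 := hmin (u.take i ++ u.drop (i + d)) (by simp; omega) (by
      intro s hs
      rcases List.mem_append.mp hs with h | h
      · exact hu2 s (List.mem_of_mem_take h)
      · exact hu2 s (List.mem_of_mem_drop h)) (by rw [h3]; exact hu3)
    exact hu4 (h3.symm.trans h4)
  have hν1 : π ν = 1 := hu3
  refine ⟨ℓ, fun i => ν ^ (i / ℓ) * (u.take (i % ℓ)).prod, hpos, by simp, ?_, ?_, ?_, ?_⟩
  · intro i
    have hm := Nat.mod_lt i hpos
    have hdm := Nat.div_add_mod i ℓ
    have hstep : (u.take (i % ℓ + 1)).prod = (u.take (i % ℓ)).prod * u[i % ℓ] := by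
      rw [List.prod_take_succ _ _ hm]
    have hg : ν ^ ((i + 1) / ℓ) * (u.take ((i + 1) % ℓ)).prod =
        ν ^ (i / ℓ) * (u.take (i % ℓ + 1)).prod := by
      rcases Nat.lt_or_ge (i % ℓ + 1) ℓ with h | h
      · have e1 : (i + 1) / ℓ = i / ℓ := by
          have hcomm := mul_comm (i / ℓ) ℓ
          rw [Nat.div_eq_iff hpos]
          constructor <;> omega
        have e2 : (i + 1) % ℓ = i % ℓ + 1 := by
          rw [Nat.add_mod]
          rcases Nat.lt_or_ge 1 ℓ with h1 | h1
          · rw [Nat.mod_eq_of_lt h1, Nat.mod_eq_of_lt h]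
          · omega
        rw [e1, e2]
      · have h' : i % ℓ + 1 = ℓ := by omega
        have e0 : i + 1 = ℓ * (i / ℓ + 1) := by
          rw [mul_add, mul_one]; omega
        rw [e0, Nat.mul_div_cancel_left _ hpos, Nat.mul_mod_right, h', hℓ, List.take_length,
          pow_succ]
        simp [hν]
    rw [hg, hstep]
    have : (ν ^ (i / ℓ) * (u.take (i % ℓ)).prod)⁻¹ *
      (ν ^ (i / ℓ) * ((u.take (i % ℓ)).prod * u[i % ℓ])) = u[i % ℓ] := by group
    rw [this]
    exact hu2 _ (List.getElem_mem _)
  · intro i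
    simp only [map_mul, map_pow, hν1, one_pow, Nat.add_mod_right]
  · intro i j hij
    simp only [map_mul, map_pow, hν1, one_pow, one_mul] at hij
    rcases lt_trichotomy (i % ℓ) (j % ℓ) with h | h | h
    · exact absurd hij (hdist _ _ h (Nat.mod_lt _ hpos))
    · exact h
    · exact absurd hij.symm (hdist _ _ h (Nat.mod_lt _ hpos))
  · intro i
    simp only [Nat.add_mod_right, Nat.add_div_right _ hpos, pow_succ]
    intro h
    rw [mul_left_inj] at h
    exact hu4 (by simpa using h)

/-- The word along the loop from `a`, of length `d`. -/
def loopWord (g : ℕ → Γ) (a d : ℕ) : List Γ :=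
  (List.range d).map (fun i => (g (a + i))⁻¹ * g (a + i + 1))

theorem loopWord_take_prod (g : ℕ → Γ) (a d j : ℕ) (hj : j ≤ d) :
    ((loopWord g a d).take j).prod = (g a)⁻¹ * g (a + j) := by
  have h : (loopWord g a d).take j = loopWord g a j := by
    simp only [loopWord, ← List.map_take, List.take_range, min_eq_left hj]
  rw [h]
  clear h hj
  induction j with
  | zero => simp [loopWord]
  | succ j ih =>
    have : loopWord g a (j + 1) = loopWord g a j ++ [(g (a + j))⁻¹ * g (a + j + 1)] := by
      simp [loopWord, List.range_succ]
    rw [this, List.prod_append, ih]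
    simp [mul_assoc, add_assoc]

theorem loopWord_length (g : ℕ → Γ) (a d : ℕ) : (loopWord g a d).length = d := by
  simp [loopWord]

theorem loop_tokenSpec {π : Γ →* Q} {S : Finset Γ} {ℓ : ℕ} {g : ℕ → Γ} (h : LoopSpec π S ℓ g)
    {R : Type*} (a d : R → ℕ) (r : R → List Q) (C : Set Q) (hC : ∀ i, π (g i) ∈ C)
    (hd1 : ∀ τ, ℓ ≤ d τ) (hd2 : ∀ τ, d τ < 2 * ℓ)
    (hr : ∀ τ, (r τ).prod = (π (g (a τ)))⁻¹ * π (g (a τ + d τ))) :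
    TokenSpec π (fun τ => loopWord g (a τ) (d τ)) r (fun τ => {q | π (g (a τ)) * q ∈ C}) S
      (2 * ℓ) where
  one_mem τ := by simpa using hC (a τ)
  letters τ x hx := by
    simp only [loopWord, List.mem_map] at hx
    obtain ⟨i, -, rfl⟩ := hx
    exact h.step _
  saw τ := by
    intro i j hij hj he
    rw [loopWord_length] at hj
    rw [loopWord_take_prod _ _ _ _ (by omega), loopWord_take_prod _ _ _ _ hj, mul_right_inj] at he
    have h1 := h.inj _ _ (congrArg π he)
    have h2 := hd2 τ
    have h3 : j = i + ℓ := by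
      have h4 : (a τ + i) ≡ (a τ + j) [MOD ℓ] := h1
      have h5 := (Nat.modEq_iff_dvd' (by omega)).1 h4
      obtain ⟨c, hc⟩ := h5
      have : c = 1 := by
        rcases c with _ | _ | c
        · omega
        · rfl
        · have : ℓ * (c + 1 + 1) = ℓ * c + 2 * ℓ := by ring
          omega
      subst this
      omega
    subst h3
    rw [← add_assoc] at he
    exact h.ne _ he.symm
  inU τ j := by
    have : ∃ j', ((loopWord g (a τ) (d τ)).take j).prod = (g (a τ))⁻¹ * g (a τ + j') := by
      rcases le_total j (d τ) with hj | hj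
      · exact ⟨j, loopWord_take_prod _ _ _ _ hj⟩
      · refine ⟨d τ, ?_⟩
        rw [← loopWord_take_prod _ _ _ _ le_rfl, List.take_of_length_le (by rw [loopWord_length]; exact hj),
          List.take_of_length_le (by rw [loopWord_length])]
    obtain ⟨j', hj'⟩ := this
    rw [hj']
    simpa using hC (a τ + j')
  prod_eq τ := by
    have := loopWord_take_prod g (a τ) (d τ) _ le_rfl
    rw [List.take_of_length_le (by rw [loopWord_length])] at this
    rw [this, hr]; simp
  loop τ := by
    refine ⟨(loopWord g (a τ) (d τ)).take ℓ, (loopWord g (a τ) (d τ)).drop ℓ, ?_,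
      (List.take_append_drop _ _).symm, ?_⟩
    · intro h0
      have h1 := congrArg List.length h0
      have := h.pos
      have := hd1 τ
      simp [loopWord_length] at h1
      omega
    · rw [loopWord_take_prod _ _ _ _ (hd1 τ)]
      simp [h.per]
  len τ := by
    rw [loopWord_length]; exact (hd2 τ).le

/-- Self-avoiding words of every length exist. -/
theorem exists_saw [Infinite Γ] (S : Finset Γ) (hsym : ∀ s ∈ S, s⁻¹ ∈ S)
    (hgen : Subgroup.closure (S : Set Γ) = ⊤) (n : ℕ) : 1 ≤ (saws S n).card := by
  obtain ⟨x, hx⟩ := Infinite.exists_notMem_finset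
    (((Finset.range n).biUnion (words S)).image List.prod)
  have hex : ∃ m, ∃ l : List Γ, l.length = m ∧ (∀ s ∈ l, s ∈ S) ∧ l.prod = x := by
    obtain ⟨l, h1, h2⟩ := exists_word S hsym hgen x
    exact ⟨l.length, l, rfl, h1, h2⟩
  obtain ⟨u, hu1, hu2, hu3⟩ := Nat.find_spec hex
  have hmin : ∀ l : List Γ, l.length < u.length → (∀ s ∈ l, s ∈ S) → l.prod ≠ x := by
    intro l hl h1 h2
    rw [hu1] at hl
    exact Nat.find_min hex hl ⟨l, rfl, h1, h2⟩
  have hn : n ≤ u.length := by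
    by_contra hlt
    apply hx
    simp only [Finset.mem_image, Finset.mem_biUnion, Finset.mem_range, mem_words]
    exact ⟨u, ⟨u.length, by omega, rfl, hu2⟩, hu3⟩
  have hsaw : IsSAW u := by
    intro i j hij hj he
    refine hmin (u.take i ++ u.drop j) (by simp; omega) ?_ ?_
    · intro s hs
      rcases List.mem_append.mp hs with h | h
      · exact hu2 s (List.mem_of_mem_take h)
      · exact hu2 s (List.mem_of_mem_drop h)
    · rw [List.prod_append, he, List.prod_take_mul_prod_drop, hu3]
  rw [Nat.one_le_iff_ne_zero, Finset.card_ne_zero]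
  refine ⟨u.take n, ?_⟩
  rw [mem_saws]
  exact ⟨by simp; omega, fun s hs => hu2 s (List.mem_of_mem_take hs), isSAW_take hsaw n⟩

end Loop

/-! ### Assembling -/

section Assemble
variable {Γ Q : Type*} [Group Γ] [Group Q]

/-- The projected loop. -/
noncomputable def loopC (π : Γ →* Q) (ℓ : ℕ) (g : ℕ → Γ) : Finset Q :=
  (Finset.range ℓ).image (fun i => π (g i))

/-- The differences of the projected loop. -/
noncomputable def loopD (π : Γ →* Q) (ℓ : ℕ) (g : ℕ → Γ) : Finset Q :=
  (loopC π ℓ g ×ˢ loopC π ℓ g).image (fun c => c.1 * c.2⁻¹)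

/-- The finite set of tokens. -/
noncomputable def tokSet (π : Γ →* Q) (T : Finset Q) (ℓ : ℕ) (g : ℕ → Γ) (N : ℕ) :
    Finset (ℕ × ℕ × List Q) :=
  ((Finset.range ℓ) ×ˢ (Finset.range (2 * ℓ)) ×ˢ ((Finset.range (N + 1)).biUnion (words T))).filter
    (fun x => ℓ ≤ x.2.1 ∧ x.2.2.prod = (π (g x.1))⁻¹ * π (g (x.1 + x.2.1)))

variable {π : Γ →* Q} {S : Finset Γ} {ℓ : ℕ} {g : ℕ → Γ} {T : Finset Q}

theorem LoopSpec.per_mul (h : LoopSpec π S ℓ g) (i c : ℕ) : π (g (i + ℓ * c)) = π (g i) := by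
  induction c with
  | zero => simp
  | succ c ih => rw [mul_add, mul_one, ← add_assoc, h.per, ih]

theorem LoopSpec.mem_C (h : LoopSpec π S ℓ g) (i : ℕ) : π (g i) ∈ loopC π ℓ g := by
  rw [loopC, Finset.mem_image]
  refine ⟨i % ℓ, Finset.mem_range.mpr (Nat.mod_lt _ h.pos), ?_⟩
  conv_rhs => rw [← Nat.mod_add_div i ℓ, h.per_mul]

theorem LoopSpec.one_mem_C (h : LoopSpec π S ℓ g) : (1 : Q) ∈ loopC π ℓ g := by
  have := h.mem_C 0
  rwa [h.zero, map_one] at this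

theorem LoopSpec.C_sub_D (h : LoopSpec π S ℓ g) {c : Q} (hc : c ∈ loopC π ℓ g) :
    c ∈ loopD π ℓ g := by
  rw [loopD, Finset.mem_image]
  exact ⟨(c, 1), Finset.mem_product.mpr ⟨hc, h.one_mem_C⟩, by simp⟩

theorem block_visits {H : Type*} [Group H] (D : Finset H) (k N : ℕ) (w : List H)
    (hbad : IsBad D (k + 1) w)
    (j : ℕ) (hj : j ∈ goods D k N w (w.length / (N + 1))) :
    ∃ i, j * (N + 1) ≤ i ∧ i ≤ j * (N + 1) + N ∧ j * (N + 1) + N < w.length ∧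
      ∀ a ≤ w.length, ((w.take i).prod)⁻¹ * (w.take a).prod ∈ D →
        j * (N + 1) ≤ a ∧ a ≤ j * (N + 1) + N := by
  rw [goods, Finset.mem_filter, Finset.mem_range] at hj
  obtain ⟨hjq, hjb⟩ := hj
  have hlen : j * (N + 1) + N < w.length := by
    have h1 : (j + 1) * (N + 1) ≤ w.length :=
      (Nat.mul_le_mul_right _ hjq).trans (Nat.div_mul_le_self _ _)
    have h2 : (j + 1) * (N + 1) = j * (N + 1) + N + 1 := by ring
    omega
  set s := j * (N + 1) with hs
  set b := (w.drop s).take N with hb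
  have hbl : b.length = N := by simp [hb]; omega
  have hpr : ∀ a ≤ N, (w.take (s + a)).prod = (w.take s).prod * (b.take a).prod := by
    intro a ha
    rw [take_add_prod, hb, List.take_take, min_eq_left ha]
  unfold IsBad at hjb
  push Not at hjb
  obtain ⟨i0, hi0, hcnt⟩ := hjb
  rw [hbl] at hi0
  refine ⟨s + i0, by omega, by omega, hlen, ?_⟩
  set A := (Finset.range (w.length + 1)).filter
    (fun a => ((w.take (s + i0)).prod)⁻¹ * (w.take a).prod ∈ D) with hA
  set A' := ((Finset.range (b.length + 1)).filter
    (fun a => ((b.take i0).prod)⁻¹ * (b.take a).prod ∈ D)).image (fun a => s + a) with hA'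
  have hsub : A' ⊆ A := by
    intro x hx
    rw [hA', Finset.mem_image] at hx
    obtain ⟨a, ha, rfl⟩ := hx
    rw [Finset.mem_filter, Finset.mem_range, hbl] at ha
    rw [hA, Finset.mem_filter, Finset.mem_range]
    refine ⟨by omega, ?_⟩
    rw [hpr i0 hi0, hpr a (by omega)]
    simpa [mul_assoc] using ha.2
  have hcA' : k ≤ A'.card := by
    rw [hA', Finset.card_image_of_injective _ (add_right_injective s)]
    exact hcnt
  have hcA : A.card ≤ k := Nat.lt_succ_iff.mp (hbad (s + i0) (by omega))
  have heq : A' = A := Finset.eq_of_subset_of_card_le hsub (hcA.trans hcA')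
  intro a ha haD
  have : a ∈ A' := by
    rw [heq, hA, Finset.mem_filter, Finset.mem_range]
    exact ⟨by omega, haD⟩
  rw [hA', Finset.mem_image] at this
  obtain ⟨a', ha', rfl⟩ := this
  rw [Finset.mem_filter, Finset.mem_range, hbl] at ha'
  omega

theorem block_data (h : LoopSpec π S ℓ g) (k N : ℕ) (w : List Q) (hwT : ∀ x ∈ w, x ∈ T)
    (hbad : IsBad (loopD π ℓ g) (k + 1) w)
    (j : ℕ) (hj : j ∈ goods (loopD π ℓ g) k N w (w.length / (N + 1))) :
    ∃ (i p e : ℕ) (τ : ↥(tokSet π T ℓ g N)),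
      j * (N + 1) ≤ i ∧ i ≤ j * (N + 1) + N ∧ i ≤ w.length ∧
      j * (N + 1) ≤ p ∧ p ≤ e ∧ e ≤ j * (N + 1) + N ∧ e < w.length ∧
      (∀ a ≤ w.length, ((w.take i).prod)⁻¹ * (w.take a).prod ∈ loopD π ℓ g →
        j * (N + 1) ≤ a ∧ a ≤ j * (N + 1) + N) ∧
      (∀ a ≤ w.length, ((w.take i).prod)⁻¹ * (w.take a).prod ∈ loopC π ℓ g → p ≤ a ∧ a ≤ e) ∧
      τ.1.2.2 = (w.drop p).take (e - p) ∧
      π (g τ.1.1) = ((w.take i).prod)⁻¹ * (w.take p).prod := by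
  obtain ⟨i, hi1, hi2, hlen, hD⟩ := block_visits _ k N w hbad j hj
  set A := (Finset.range (w.length + 1)).filter
    (fun a => ((w.take i).prod)⁻¹ * (w.take a).prod ∈ loopC π ℓ g) with hA
  have hiA : i ∈ A := by
    rw [hA, Finset.mem_filter, Finset.mem_range]
    exact ⟨by omega, by simpa using h.one_mem_C⟩
  have hne : A.Nonempty := ⟨i, hiA⟩
  have hmemA : ∀ a ∈ A, a ≤ w.length ∧
      ((w.take i).prod)⁻¹ * (w.take a).prod ∈ loopC π ℓ g := by
    intro a ha
    rw [hA, Finset.mem_filter, Finset.mem_range] at ha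
    exact ⟨by omega, ha.2⟩
  obtain ⟨p, hpA, hpmin⟩ : ∃ p ∈ A, ∀ a ∈ A, p ≤ a :=
    ⟨A.min' hne, A.min'_mem hne, fun a ha => A.min'_le a ha⟩
  obtain ⟨e, heA, hemax⟩ : ∃ p ∈ A, ∀ a ∈ A, a ≤ p :=
    ⟨A.max' hne, A.max'_mem hne, fun a ha => A.le_max' a ha⟩
  obtain ⟨hp1, hp2⟩ := hmemA p hpA
  obtain ⟨he1, he2⟩ := hmemA e heA
  have hpD := hD p hp1 (h.C_sub_D hp2)
  have heD := hD e he1 (h.C_sub_D he2)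
  have hpe : p ≤ e := hpmin e heA
  have hp2' := hp2
  have he2' := he2
  rw [loopC, Finset.mem_image] at hp2' he2'
  obtain ⟨a, ha, hap⟩ := hp2'
  obtain ⟨b, hb, hbe⟩ := he2'
  rw [Finset.mem_range] at ha hb
  have hd : ∃ d, ℓ ≤ d ∧ d < 2 * ℓ ∧ π (g (a + d)) = π (g b) := by
    rcases le_or_gt a b with hab | hab
    · refine ⟨ℓ + (b - a), by omega, by omega, ?_⟩
      rw [show a + (ℓ + (b - a)) = b + ℓ by omega, h.per]
    · refine ⟨2 * ℓ + b - a, by omega, by omega, ?_⟩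
      rw [show a + (2 * ℓ + b - a) = b + ℓ + ℓ by omega, h.per, h.per]
  obtain ⟨d, hd1, hd2, hd3⟩ := hd
  have hmem : (a, d, (w.drop p).take (e - p)) ∈ tokSet π T ℓ g N := by
    simp only [tokSet, Finset.mem_filter, Finset.mem_product, Finset.mem_range, Finset.mem_biUnion,
      mem_words]
    refine ⟨⟨ha, hd2, e - p, by omega, by simp; omega, fun x hx =>
      hwT x (List.mem_of_mem_drop (List.mem_of_mem_take hx))⟩, hd1, ?_⟩
    rw [hd3, hbe, hap]
    have h1 : (w.take e).prod = (w.take p).prod * ((w.drop p).take (e - p)).prod := by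
      rw [← take_add_prod, Nat.add_sub_cancel' hpe]
    rw [h1]
    group
  refine ⟨i, p, e, ⟨_, hmem⟩, hi1, hi2, by omega, hpD.1, hpe, heD.2, by omega, hD, ?_, rfl, hap⟩
  intro x hx hxC
  have hxA : x ∈ A := by
    rw [hA, Finset.mem_filter, Finset.mem_range]
    exact ⟨by omega, hxC⟩
  exact ⟨hpmin x hxA, hemax x hxA⟩

/-- Token data. -/
def tokR (π : Γ →* Q) (T : Finset Q) (ℓ : ℕ) (g : ℕ → Γ) (N : ℕ) :
    ↥(tokSet π T ℓ g N) → List Q := fun τ => τ.1.2.2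

/-- Token region. -/
def tokU (π : Γ →* Q) (T : Finset Q) (ℓ : ℕ) (g : ℕ → Γ) (N : ℕ) :
    ↥(tokSet π T ℓ g N) → Set Q :=
  fun τ => {q | π (g τ.1.1) * q ∈ (loopC π ℓ g : Set Q)}

/-- Token loop word. -/
def tokL (π : Γ →* Q) (T : Finset Q) (ℓ : ℕ) (g : ℕ → Γ) (N : ℕ) :
    ↥(tokSet π T ℓ g N) → List Γ := fun τ => loopWord g τ.1.1 τ.1.2.1

theorem tok_spec (h : LoopSpec π S ℓ g) (N : ℕ) :
    TokenSpec π (tokL π T ℓ g N) (tokR π T ℓ g N) (tokU π T ℓ g N) S (2 * ℓ) := by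
  have hm : ∀ τ : ↥(tokSet π T ℓ g N), τ.1.2.1 < 2 * ℓ ∧ ℓ ≤ τ.1.2.1 ∧
      τ.1.2.2.prod = (π (g τ.1.1))⁻¹ * π (g (τ.1.1 + τ.1.2.1)) := by
    rintro ⟨τ, hτ⟩
    simp only [tokSet, Finset.mem_filter, Finset.mem_product, Finset.mem_range] at hτ
    exact ⟨hτ.1.2.1, hτ.2.1, hτ.2.2⟩
  exact loop_tokenSpec h (fun τ : ↥(tokSet π T ℓ g N) => τ.1.1) (fun τ => τ.1.2.1)
    (fun τ => τ.1.2.2) _ (fun i => h.mem_C i) (fun τ => (hm τ).2.1) (fun τ => (hm τ).1)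
    (fun τ => (hm τ).2.2)

theorem marked_exists (h : LoopSpec π S ℓ g) (k N n : ℕ) (w : List Q) (hw : w ∈ saws T n)
    (hbad : IsBad (loopD π ℓ g) (k + 1) w) {t : ℝ} (ht : 0 ≤ t) :
    ∃ X : Finset (List (Option ↥(tokSet π T ℓ g N) × Q)),
      (∀ x ∈ X, Adm (tokR π T ℓ g N) (tokU π T ℓ g N) T x ∧ ww (tokR π T ℓ g N) x = w) ∧
      (1 + t) ^ (goods (loopD π ℓ g) k N w (n / (N + 1))).card ≤
        ∑ x ∈ X, t ^ (toks x).length := by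
  rw [mem_saws] at hw
  obtain ⟨rfl, hwT, hsaw⟩ := hw
  set J := goods (loopD π ℓ g) k N w (w.length / (N + 1)) with hJ
  have hne : Nonempty ↥(tokSet π T ℓ g N) := by
    refine ⟨⟨(0, ℓ, []), ?_⟩⟩
    simp only [tokSet, Finset.mem_filter, Finset.mem_product, Finset.mem_range, Finset.mem_biUnion,
      mem_words]
    have hp := h.pos
    refine ⟨⟨hp, by omega, 0, by omega, by simp⟩, le_rfl, ?_⟩
    rw [h.per]; simp
  choose! i p e τ d1 d2 d3 d4 d5 d6 d7 d8 d9 d10 d11 using block_data (T := T) h k N w hwT hbad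
  rw [← hJ] at d1 d2 d3 d4 d5 d6 d7 d8 d9 d10 d11
  have hdiv : ∀ j ∈ J, p j / (N + 1) = j := by
    intro j hj
    have h1 := d4 j hj
    have h2 := d5 j hj
    have h3 := d6 j hj
    rw [Nat.div_eq_iff (by omega)]
    constructor <;> omega
  have hsep : ∀ j ∈ J, ∀ j' ∈ J, p j < p j' → j * (N + 1) + N < j' * (N + 1) := by
    intro j hj j' hj' hlt
    have hjj : j < j' := by
      have h1 : j ≤ j' := by
        rw [← hdiv j hj, ← hdiv j' hj']
        exact Nat.div_le_div_right hlt.le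
      rcases h1.eq_or_lt with rfl | h2
      · omega
      · exact h2
    have h1 : (j + 1) * (N + 1) ≤ j' * (N + 1) := Nat.mul_le_mul_right _ hjj
    have h2 : (j + 1) * (N + 1) = j * (N + 1) + N + 1 := by ring
    omega
  have hinj : Set.InjOn p J := by
    intro a ha b hb hab
    rw [← hdiv a ha, ← hdiv b hb, hab]
  obtain ⟨X, hX, hs⟩ := build (r := tokR π T ℓ g N) (U := tokU π T ℓ g N) (T := T) w hsaw hwT
    (J.image p) (fun x => e (x / (N + 1)))
    (fun x => {q | ((w.take (i (x / (N + 1)))).prod)⁻¹ * q ∈ loopC π ℓ g})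
    (fun x => τ (x / (N + 1)))
    (by
      intro x hx
      obtain ⟨j, hj, rfl⟩ := Finset.mem_image.mp hx
      simp only [hdiv j hj]
      exact d5 j hj)
    (by
      intro x hx
      obtain ⟨j, hj, rfl⟩ := Finset.mem_image.mp hx
      simp only [hdiv j hj]
      exact d7 j hj)
    (by
      intro x hx
      obtain ⟨j, hj, rfl⟩ := Finset.mem_image.mp hx
      simp only [hdiv j hj]
      exact d10 j hj)
    (by
      intro x hx q
      obtain ⟨j, hj, rfl⟩ := Finset.mem_image.mp hx
      simp only [hdiv j hj, tokU, Set.mem_ofPred_eq, Finset.mem_coe]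
      rw [d11 j hj, mul_assoc])
    (by
      intro x hx a ha hC
      obtain ⟨j, hj, rfl⟩ := Finset.mem_image.mp hx
      simp only [hdiv j hj, Set.mem_ofPred_eq] at hC ⊢
      exact d9 j hj a ha hC)
    (by
      intro x hx x' hx' hlt
      obtain ⟨j, hj, rfl⟩ := Finset.mem_image.mp hx
      obtain ⟨j', hj', rfl⟩ := Finset.mem_image.mp hx'
      simp only [hdiv j hj]
      have := hsep j hj j' hj' hlt
      have := d6 j hj
      have := d4 j' hj'
      omega)
    (by
      intro x hx x' hx' hlt q hq hq'
      obtain ⟨j, hj, rfl⟩ := Finset.mem_image.mp hx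
      obtain ⟨j', hj', rfl⟩ := Finset.mem_image.mp hx'
      simp only [hdiv j hj, hdiv j' hj', Set.mem_ofPred_eq] at hq hq'
      have h1 := hsep j hj j' hj' hlt
      have h2 := d1 j' hj'
      have h3 : ((w.take (i j)).prod)⁻¹ * (w.take (i j')).prod ∈ loopD π ℓ g := by
        rw [loopD, Finset.mem_image]
        exact ⟨(_, _), Finset.mem_product.mpr ⟨hq, hq'⟩, by group⟩
      have h4 := d8 j hj _ (d3 j' hj') h3
      omega)
    ht w.length 0 (by omega) (by omega)
  refine ⟨X, fun x hx => ⟨(hX x hx).1, by simpa using (hX x hx).2.1⟩, ?_⟩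
  simp only [Nat.zero_le, Finset.filter_true] at hs
  rwa [Finset.card_image_of_injOn hinj] at hs

theorem exists_beta {K : ℕ} {c : ℝ} (hc : 0 < c) : ∃ β : ℝ, 1 < β ∧ β ^ K ≤ 1 + c := by
  have hcont : Tendsto (fun x : ℝ => x ^ K) (nhdsWithin 1 (Set.Ioi 1)) (nhds (1 ^ K)) :=
    ((continuous_pow K).tendsto 1).mono_left nhdsWithin_le_nhds
  have h1 := hcont.eventually (gt_mem_nhds (show (1:ℝ) ^ K < 1 + c by rw [one_pow]; linarith))
  obtain ⟨β, h2, h3⟩ := (h1.and self_mem_nhdsWithin).exists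
  exact ⟨β, h3, h2.le⟩

theorem exists_y {M : ℕ} {μ β : ℝ} (hμ : 0 < μ) (hβ : 1 < β) :
    ∃ y : ℝ, μ < y ∧ y < 2 * μ ∧ y ^ M < β * μ ^ M := by
  have hcont : Tendsto (fun x : ℝ => x ^ M) (nhdsWithin μ (Set.Ioi μ)) (nhds (μ ^ M)) :=
    ((continuous_pow M).tendsto μ).mono_left nhdsWithin_le_nhds
  have h1 := hcont.eventually (gt_mem_nhds (show μ ^ M < β * μ ^ M by
    have : 0 < μ ^ M := by positivity
    nlinarith))
  have h4 : ∀ᶠ x in nhdsWithin μ (Set.Ioi μ), x < 2 * μ :=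
    mem_nhdsWithin_of_mem_nhds (gt_mem_nhds (by linarith))
  obtain ⟨y, h2, h3, h5⟩ := (h1.and (h4.and self_mem_nhdsWithin)).exists
  exact ⟨y, h5, h3, h2⟩

theorem good_small (h : LoopSpec π S ℓ g) {φ : Q → Γ}
    (hφ : ∀ q ∈ T, φ q ∈ S ∧ π (φ q) = q) (k N : ℕ) {K : ℕ} {μ : ℝ} (hμ : 1 ≤ μ)
    (hlim : Tendsto (fun n : ℕ => ((saws S n).card : ℝ) ^ (1 / (n : ℝ))) atTop (nhds μ)) :
    Small μ (fun n => (((saws T n).filter (fun w => IsBad (loopD π ℓ g) (k + 1) w ∧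
      n / (N + 1) < K * (goods (loopD π ℓ g) k N w (n / (N + 1))).card)).card : ℝ)) := by
  have hμ0 : 0 < μ := by linarith
  set Λ := 2 * ℓ with hΛ
  set R := ↥(tokSet π T ℓ g N) with hR
  obtain ⟨t, ht0, ht⟩ : ∃ t : ℝ, 0 < t ∧ Fintype.card R * t ≤ 1 / 2 := by
    refine ⟨1 / (2 * (Fintype.card R + 1)), by positivity, ?_⟩
    rw [mul_one_div, div_le_div_iff₀ (by positivity) (by positivity)]
    linarith
  obtain ⟨β, hβ1, hβ2⟩ := exists_beta (K := K) (show 0 < t * ((2 * μ)⁻¹) ^ Λ by positivity)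
  obtain ⟨y, hy1, hy2, hy3⟩ := exists_y (M := N + 1) hμ0 hβ1
  have hy0 : 0 < y := by linarith
  obtain ⟨A, hA0, hA⟩ := sum_bound (fun n => Nat.cast_nonneg _) hμ0 hlim hy1
  set z := y⁻¹ with hz
  have hz0 : 0 < z := by positivity
  have hz1 : z ≤ 1 := inv_le_one_of_one_le₀ (by linarith)
  have hzμ : (2 * μ)⁻¹ ≤ z := inv_anti₀ hy0 hy2.le
  set t' := t * z ^ Λ with ht'
  have ht'0 : 0 ≤ t' := by positivity
  have hβ3 : β ^ K ≤ 1 + t' := by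
    refine hβ2.trans ?_
    have : ((2 * μ)⁻¹) ^ Λ ≤ z ^ Λ := pow_le_pow_left₀ (by positivity) hzμ _
    have := mul_le_mul_of_nonneg_left this ht0.le
    linarith
  have hβ0 : 0 < β := by linarith
  refine small_of_blocks (C := A * 2 * y ^ (N + 1)) (Y := y ^ (N + 1) / β) (M := N + 1) hμ0
    (by omega) (by positivity) (by positivity) (by rw [div_lt_iff₀ hβ0, mul_comm]; exact hy3)
    fun n => ?_
  set q := n / (N + 1) with hq
  set F := (saws T n).filter (fun w => IsBad (loopD π ℓ g) (k + 1) w ∧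
      q < K * (goods (loopD π ℓ g) k N w q).card) with hF
  have hsp := tok_spec (T := T) h N
  have hex : ∀ w : List Q, ∃ X : Finset (List (Option R × Q)), w ∈ F →
      (∀ x ∈ X, Adm (tokR π T ℓ g N) (tokU π T ℓ g N) T x ∧ ww (tokR π T ℓ g N) x = w) ∧
      β ^ q ≤ ∑ x ∈ X, t' ^ (toks x).length := by
    intro w
    by_cases hw : w ∈ F
    · rw [hF, Finset.mem_filter] at hw
      obtain ⟨X, hX1, hX2⟩ := marked_exists h k N n w hw.1 hw.2.1 ht'0
      refine ⟨X, fun _ => ⟨hX1, le_trans ?_ hX2⟩⟩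
      calc β ^ q ≤ β ^ (K * (goods (loopD π ℓ g) k N w q).card) :=
            pow_le_pow_right₀ hβ1.le hw.2.2.le
        _ = (β ^ K) ^ (goods (loopD π ℓ g) k N w q).card := by rw [pow_mul]
        _ ≤ _ := pow_le_pow_left₀ (by positivity) hβ3 _
    · exact ⟨∅, fun h => absurd h hw⟩
  choose X hX using hex
  have hdisj : (F : Set (List Q)).PairwiseDisjoint X := by
    intro a ha b hb hab
    rw [Function.onFun, Finset.disjoint_left]
    intro x hx hx'
    exact hab (((hX a ha).1 x hx).2.symm.trans ((hX b hb).1 x hx').2)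
  have hwb := weight_bound hsp hφ hz0 ht0.le ht hA0 hA (F.biUnion X) (by
    intro x hx
    obtain ⟨w, hw, hx⟩ := Finset.mem_biUnion.mp hx
    exact ((hX w hw).1 x hx).1)
  rw [Finset.sum_biUnion hdisj] at hwb
  have hlow : (F.card : ℝ) * (z ^ n * β ^ q) ≤ A * 2 := by
    refine le_trans ?_ hwb
    rw [← nsmul_eq_mul, ← Finset.sum_const]
    refine Finset.sum_le_sum fun w hw => ?_
    have hwn : w.length = n := ((mem_saws _ _ _).1 (Finset.mem_filter.mp (hF ▸ hw)).1).1
    refine (mul_le_mul_of_nonneg_left (hX w hw).2 (by positivity)).trans ?_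
    rw [Finset.mul_sum]
    refine Finset.sum_le_sum fun x hx => ?_
    have hl := (vw_length (φ := φ) hsp x).1
    rw [((hX w hw).1 x hx).2, hwn] at hl
    have h1 : z ^ (n + Λ * (toks x).length) ≤ z ^ (vw (tokL π T ℓ g N) φ x).length :=
      pow_le_pow_of_le_one hz0.le hz1 hl
    calc z ^ n * t' ^ (toks x).length = z ^ (n + Λ * (toks x).length) * t ^ (toks x).length := by
          rw [ht', mul_pow, pow_add, pow_mul]; ring
      _ ≤ _ := mul_le_mul_of_nonneg_right h1 (by positivity)
  have hyn : y ^ n ≤ (y ^ (N + 1)) ^ q * y ^ (N + 1) := by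
    rw [← pow_mul, ← pow_add]
    refine pow_le_pow_right₀ (by linarith) ?_
    have h1 := Nat.div_add_mod n (N + 1)
    have h2 := Nat.mod_lt n (show 0 < N + 1 by omega)
    rw [← hq] at h1
    omega
  have hzn : z ^ n * y ^ n = 1 := by
    rw [← mul_pow, hz, inv_mul_cancel₀ hy0.ne', one_pow]
  have h5 : (F.card : ℝ) ≤ A * 2 * y ^ n / β ^ q := by
    rw [le_div_iff₀ (by positivity)]
    calc (F.card : ℝ) * β ^ q = (F.card : ℝ) * (z ^ n * β ^ q) * y ^ n := by
          rw [show (F.card : ℝ) * (z ^ n * β ^ q) * y ^ n = F.card * β ^ q * (z ^ n * y ^ n) by ring,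
            hzn, mul_one]
      _ ≤ _ := mul_le_mul_of_nonneg_right hlow (by positivity)
  refine h5.trans ?_
  rw [div_pow, div_le_iff₀ (by positivity)]
  calc A * 2 * y ^ n ≤ A * 2 * ((y ^ (N + 1)) ^ q * y ^ (N + 1)) :=
        mul_le_mul_of_nonneg_left hyn (by positivity)
    _ = _ := by field_simp

theorem saws_small (h : LoopSpec π S ℓ g) {φ : Q → Γ}
    (hφ : ∀ q ∈ T, φ q ∈ S ∧ π (φ q) = q) {μ : ℝ} (hμ : 1 ≤ μ)
    (hlim : Tendsto (fun n : ℕ => ((saws S n).card : ℝ) ^ (1 / (n : ℝ))) atTop (nhds μ)) :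
    Small μ (fun n => ((saws T n).card : ℝ)) := by
  have hμ0 : 0 < μ := by linarith
  set D := loopD π ℓ g with hD
  by_cases htop : ∃ N, (T.card : ℝ) * (bads T D (D.card + 1) N).card < μ ^ (N + 1)
  · obtain ⟨N, hN⟩ := htop
    obtain ⟨K, -, C, y, hy0, hy, hs⟩ := block_small T D (D.card + 1) N hμ0 hN
    refine ⟨C, y, hy0, hy, fun n => le_trans (le_of_eq ?_) (hs n)⟩
    beta_reduce
    congr 2
    symm
    rw [Finset.filter_eq_self]
    intro w hw
    have : goods D (D.card + 1) N w (n / (N + 1)) = ∅ := by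
      rw [goods, Finset.filter_eq_empty_iff]
      intro j _
      rw [not_not]
      intro i _
      exact Nat.lt_succ_of_le (cnt_le_card (isSAW_take (isSAW_drop ((mem_saws _ _ _).1 hw).2.2 _) _) i)
    rw [this]
    simp
  · exfalso
    have hk : ∃ k, (∃ N, (T.card : ℝ) * (bads T D k N).card < μ ^ (N + 1)) ∧
        ¬ (∃ N, (T.card : ℝ) * (bads T D (k + 1) N).card < μ ^ (N + 1)) := by
      by_contra hcon
      push Not at hcon
      apply htop
      have : ∀ k, ∃ N, (T.card : ℝ) * (bads T D k N).card < μ ^ (N + 1) := by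
        intro k
        induction k with
        | zero =>
          refine ⟨0, ?_⟩
          have : bads T D 0 0 = ∅ := by
            rw [bads, Finset.filter_eq_empty_iff]
            intro w _ hw
            exact absurd (hw 0 (by omega)) (by omega)
          rw [this]
          simpa using hμ0
        | succ k ih =>
          obtain ⟨N, hN⟩ := ih
          exact hcon k ⟨N, hN⟩
      exact this _
    obtain ⟨k, ⟨N, hN⟩, hk2⟩ := hk
    push Not at hk2
    obtain ⟨K, -, hs1⟩ := block_small T D k N hμ0 hN
    have hs2 := good_small (K := K) h hφ k N hμ hlim
    rw [← hD] at hs2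
    have hT : 0 < (T.card : ℝ) := by
      by_contra hT
      have h1 := hk2 0
      have h2 : (T.card : ℝ) = 0 := le_antisymm (not_lt.mp hT) (Nat.cast_nonneg _)
      rw [h2, zero_mul] at h1
      have : 0 < μ ^ (0 + 1) := by positivity
      linarith
    refine small_contra hs1 hs2 (c := μ / T.card) (by positivity) fun n => ?_
    have h1 := hk2 n
    have h2 : ((bads T D (k + 1) n).card : ℝ) ≤
        ((saws T n).filter (fun w => K * (goods D k N w (n / (N + 1))).card ≤ n / (N + 1))).card +
        ((saws T n).filter (fun w => IsBad D (k + 1) w ∧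
          n / (N + 1) < K * (goods D k N w (n / (N + 1))).card)).card := by
      norm_cast
      refine le_trans (Finset.card_le_card ?_) (Finset.card_union_le _ _)
      intro w hw
      rw [bads, Finset.mem_filter] at hw
      rw [Finset.mem_union, Finset.mem_filter, Finset.mem_filter]
      rcases le_or_gt (K * (goods D k N w (n / (N + 1))).card) (n / (N + 1)) with hle | hgt
      · left; exact ⟨hw.1, hle⟩
      · right; exact ⟨hw.1, hw.2, hgt⟩
    refine le_trans ?_ h2
    rw [div_mul_eq_mul_div, div_le_iff₀ hT, mul_comm _ (T.card : ℝ), ← pow_succ']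
    exact h1

end Assemble

end RelatorProof

/-- Let `Γ` be an infinite group generated by a finite set `S` with
`S = S⁻¹` and `id ∉ S`, and let `G = G(Γ,S)` be its Cayley graph, with connective constant
`μ(G)`. Let `ρ ∈ Γ` with `ρ ≠ id`, let `N` be the normal closure of `{ρ}` in `Γ`, and let
`G_ρ` be the Cayley graph of `Γ/N` with respect to the image of `S`. Let `σ_n^ρ` denote
the number of `n`-step self-avoiding walks in `G_ρ` starting at the identity coset. Then
`limsup (σ_n^ρ)^{1/n} < μ(G)`. -/
theorem connective_lt_of_add_relator {Γ : Type*} [Group Γ] [Infinite Γ] (S : Finset Γ)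
    (hsym : ∀ s ∈ S, s⁻¹ ∈ S) (hid : (1 : Γ) ∉ S)
    (hgen : Subgroup.closure (S : Set Γ) = ⊤)
    (μ : ℝ) (hμ : HasConnectiveConst (cayleyGraph (S : Set Γ)) μ)
    (ρ : Γ) (hρ : ρ ≠ 1) :
    Filter.limsup
      (fun n : ℕ =>
        (sawCount
          (cayleyGraph ((QuotientGroup.mk '' (S : Set Γ)) :
            Set (Γ ⧸ Subgroup.normalClosure {ρ})))
          (1 : Γ ⧸ Subgroup.normalClosure {ρ}) n : ℝ) ^ (1 / (n : ℝ)))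
      Filter.atTop < μ := by
  classical
  let π := QuotientGroup.mk' (Subgroup.normalClosure {ρ})
  have hπρ : π ρ = 1 := by
    rw [QuotientGroup.mk'_apply, QuotientGroup.eq_one_iff]
    exact Subgroup.subset_normalClosure rfl
  obtain ⟨ℓ, g, hl⟩ := RelatorProof.exists_loop π S hsym hgen ρ hρ hπρ
  let T : Finset (Γ ⧸ Subgroup.normalClosure {ρ}) := S.image π
  have hTc : ((QuotientGroup.mk '' (S : Set Γ)) : Set (Γ ⧸ Subgroup.normalClosure {ρ})) =
      (T : Set (Γ ⧸ Subgroup.normalClosure {ρ})) := by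
    simp only [T, Finset.coe_image]
    rfl
  have hTsym : ∀ s ∈ T, s⁻¹ ∈ T := by
    intro s hs
    obtain ⟨a, ha, rfl⟩ := Finset.mem_image.mp hs
    exact Finset.mem_image.mpr ⟨a⁻¹, hsym a ha, map_inv _ _⟩
  have hφ : ∀ q, ∃ a, q ∈ T → a ∈ S ∧ π a = q := by
    intro q
    by_cases hq : q ∈ T
    · obtain ⟨a, ha, h⟩ := Finset.mem_image.mp hq
      exact ⟨a, fun _ => ⟨ha, h⟩⟩
    · exact ⟨1, fun h => absurd h hq⟩
  choose φ hφ using hφ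
  have hlim := hμ 1
  simp only [RelatorProof.sawCount_eq S hsym] at hlim
  have hμ1 : 1 ≤ μ := by
    refine ge_of_tendsto' hlim fun n => ?_
    refine Real.one_le_rpow ?_ (by positivity)
    exact_mod_cast RelatorProof.exists_saw S hsym hgen n
  rw [hTc]
  simp only [RelatorProof.sawCount_eq T hTsym]
  exact RelatorProof.limsup_lt_of_small (fun n => Nat.cast_nonneg _)
    (RelatorProof.saws_small hl hφ hμ1 hlim)
end

section
/- Let A be a group acting on a set V and let B be a subgroup of A whose orbit partition of V is A-invariant, i.e. whenever u and v lie in the same B-orbit and γ ∈ A, then γu and γv lie in the same B-orbit. Then the normal closure N of B in A (the smallest normal subgroup of A containing B) has exactly the same orbits on V as B. -/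
/-- Let `A` be a group acting on a set `V` and let `B` be a subgroup of
`A` whose orbit partition of `V` is `A`-invariant, i.e. whenever `u` and `v` lie in the
same `B`-orbit and `γ ∈ A`, then `γu` and `γv` lie in the same `B`-orbit. Then the normal
closure `N` of `B` in `A` has exactly the same orbits on `V` as `B`. -/
theorem normalClosure_orbits_eq {A V : Type*} [Group A] [MulAction A V] (B : Subgroup A)
    (hinv : ∀ u v : V, (∃ β ∈ B, β • u = v) → ∀ γ : A, ∃ β' ∈ B, β' • (γ • u) = γ • v) :
    ∀ v : V, {w : V | ∃ γ ∈ Subgroup.normalClosure (B : Set A), γ • v = w} =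
      {w : V | ∃ β ∈ B, β • v = w} := by
  let K : Subgroup A :=
    { carrier := {γ | ∀ v : V, ∃ β ∈ B, β • v = γ • v}
      one_mem' := fun v => ⟨1, B.one_mem, rfl⟩
      mul_mem' := by
        intro a b ha hb v
        obtain ⟨β, hβ, h⟩ := hb v
        obtain ⟨β', hβ', h'⟩ := ha (b • v)
        exact ⟨β' * β, B.mul_mem hβ' hβ, by rw [mul_smul, h, h', mul_smul]⟩
      inv_mem' := by
        intro a ha v
        obtain ⟨β, hβ, h⟩ := ha (a⁻¹ • v)
        refine ⟨β⁻¹, B.inv_mem hβ, ?_⟩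
        rw [smul_inv_smul] at h
        rw [inv_smul_eq_iff, h] }
  have hK : K.Normal := by
    refine ⟨fun n hn g v => ?_⟩
    obtain ⟨β, hβ, h⟩ := hinv (g⁻¹ • v) (n • g⁻¹ • v) (hn _) g
    exact ⟨β, hβ, by rw [smul_inv_smul] at h; rw [h, mul_smul, mul_smul]⟩
  have hle : Subgroup.normalClosure (B : Set A) ≤ K :=
    Subgroup.normalClosure_le_normal (fun b hb v => ⟨b, hb, rfl⟩)
  intro v
  ext w
  constructor
  · rintro ⟨γ, hγ, rfl⟩
    exact hle hγ v
  · rintro ⟨β, hβ, rfl⟩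
    exact ⟨β, Subgroup.subset_normalClosure hβ, rfl⟩
end
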